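/- arXiv:2211.07736 — 5 statements merged into one kernel-verified Lean document; each statement's English description precedes it below -/
import Mathlib

section
/- Let X be a complex Banach space, T a bounded linear operator on X, and β an ordinal. Suppose that T is g_σ^{β+1}-invertible and that 0 ∈ acc σ(T). Then there exists a sequence (M_m, N_m)_{m∈ℕ} of pairs in Red(T) such that for every m: T_{M_m} is an invertible operator on M_m, acc^β σ(T_{N_m}) ⊆ {0}, σ(T_{M_m}) ⊊ σ(T_{M_{m+1}}), σ(T_{N_{m+1}}) ⊊ σ(T_{N_m}), and σ(T_{M_m}) ∩ σ(T_{N_m}) = ∅. -/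
open Ordinal Set

/-- The `α`-th Cantor–Bendixson derivative of a set `A ⊆ ℂ`, defined by transfinite
recursion: `cbd A 0 = A`, `cbd A (β+1) = derivedSet (cbd A β)` (the set of accumulation
points of `cbd A β`), and `cbd A α = ⋂_{β < α} cbd A β` for limit ordinals `α`. -/
noncomputable def cbd (A : Set ℂ) (α : Ordinal) : Set ℂ :=
  Ordinal.limitRecOn α A (fun _ ih => derivedSet ih)
    (fun α _ ih => ⋂ (β : Set.Iio α), ih β.1 β.2)

variable {X : Type*} [NormedAddCommGroup X] [NormedSpace ℂ X] [CompleteSpace X]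

/-- The restriction `T_M` of a bounded operator `T` to a `T`-invariant subspace `M`. -/
noncomputable def restr (T : X →L[ℂ] X) (M : Submodule ℂ X)
    (hM : ∀ x ∈ M, T x ∈ M) : M →L[ℂ] M :=
  { toLinearMap := T.toLinearMap.restrict hM
    cont := (T.continuous.comp continuous_subtype_val).subtype_mk _ }


/-- `T` is `g_σ^{β+1}`-invertible: there is `(M, N) ∈ Red T` (a pair of closed
`T`-invariant subspaces with `X = M ⊕ N`) such that `T_M` is invertible and
`acc^β σ(T_N) ⊆ {0}`. -/
def GInv (β : Ordinal) (T : X →L[ℂ] X) : Prop :=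
  ∃ (M N : Submodule ℂ X) (hM : ∀ x ∈ M, T x ∈ M) (hN : ∀ x ∈ N, T x ∈ N),
    IsClosed (M : Set X) ∧ IsClosed (N : Set X) ∧ IsCompl M N ∧
    IsUnit (restr T M hM) ∧ cbd (spectrum ℂ (restr T N hN)) β ⊆ {0}

/-!
If `0 ∉ σ(T_M)` and `acc^β σ(T_N) ⊆ {0}`, then `σ(T)` agrees with `σ(T_N)` near `0`. A perfect
subset of `σ(T_N)` would survive every Cantor–Bendixson derivative, so by the Cantor–Bendixson
theorem `σ(T_N)` is countable. Hence arbitrarily small circles around `0` miss `σ(T)`, and as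
`0 ∈ acc σ(T)` their radii can be chosen so that consecutive circles enclose a point of `σ(T)`
between them. The Riesz projections of `T` along these circles produce the required decompositions.

The Riesz projection `P` of `a` along a circle `Γ` and the Cauchy transform `C` of its resolvent
satisfy `(w - a) C(w) = 1 - P` for `w` inside `Γ` and `(w - a) C(w) = -P` for `w` outside `Γ`. For
`a = T`, `C(w)` thus inverts `w - T` on `ker P`, respectively `-C(w)` does so on `range P`, which
locates the spectra of the two restrictions.
-/

theorem sdiff_ssubset_sdiff_of_inter_ssubset_inter {α : Type*} {S A B : Set α}
    (h : S ∩ A ⊂ S ∩ B) : S \ B ⊂ S \ A := by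
  obtain ⟨hsub, x, hxB, hxA⟩ := Set.ssubset_iff_exists.1 h
  exact Set.ssubset_iff_exists.2 ⟨fun y hy ↦ ⟨hy.1, fun hyA ↦ hy.2 (hsub ⟨hy.1, hyA⟩).2⟩,
    x, ⟨hxB.1, fun hxA' ↦ hxA ⟨hxB.1, hxA'⟩⟩, fun hx ↦ hx.2 hxB.2⟩

section CantorBendixson

@[simp]
theorem cbd_zero (A : Set ℂ) : cbd A 0 = A :=
  Ordinal.limitRecOn_zero _ _ _

theorem cbd_add_one (A : Set ℂ) (α : Ordinal) : cbd A (α + 1) = derivedSet (cbd A α) :=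
  Ordinal.limitRecOn_add_one _ _ _ _

theorem cbd_of_isSuccLimit (A : Set ℂ) {α : Ordinal} (hα : Order.IsSuccLimit α) :
    cbd A α = ⋂ β : Set.Iio α, cbd A β.1 :=
  Ordinal.limitRecOn_limit _ _ _ _ hα

theorem cbd_mono {A B : Set ℂ} (h : A ⊆ B) (α : Ordinal) : cbd A α ⊆ cbd B α := by
  induction α using Ordinal.limitRecOn with
  | zero => simpa only [cbd_zero] using h
  | add_one α ih => simpa only [cbd_add_one] using derivedSet_mono _ _ ih
  | limit α hα ih =>
    rw [cbd_of_isSuccLimit A hα, cbd_of_isSuccLimit B hα]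
    exact Set.iInter_mono fun β ↦ ih β.1 β.2

theorem subset_cbd_of_preperfect {A D : Set ℂ} (hD : Preperfect D) (h : D ⊆ A) (α : Ordinal) :
    D ⊆ cbd A α := by
  induction α using Ordinal.limitRecOn with
  | zero => simpa only [cbd_zero] using h
  | add_one α ih =>
    rw [cbd_add_one]
    exact (preperfect_iff_subset_derivedSet.1 hD).trans (derivedSet_mono _ _ ih)
  | limit α hα ih =>
    rw [cbd_of_isSuccLimit A hα]
    exact Set.subset_iInter fun β ↦ ih β.1 β.2

theorem not_countable_of_perfect {α : Type*} [MetricSpace α] [CompleteSpace α] {D : Set α}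
    (hD : Perfect D) (hne : D.Nonempty) : ¬ D.Countable := by
  intro hc
  obtain ⟨f, hfD, -, hf⟩ := hD.exists_nat_bool_injection hne
  have hle := Cardinal.lift_le_aleph0.2 (hc.mono hfD).le_aleph0
  have hcont : Cardinal.mk (ℕ → Bool) = Cardinal.continuum := by simp
  rw [Cardinal.mk_range_eq_of_injective hf, hcont, Cardinal.lift_continuum] at hle
  exact Cardinal.aleph0_lt_continuum.not_ge hle

theorem countable_of_countable_cbd {A : Set ℂ} (hA : IsClosed A) {α : Ordinal}
    (h : (cbd A α).Countable) : A.Countable := by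
  by_contra hc
  obtain ⟨D, hD, hne, hDA⟩ := exists_perfect_nonempty_of_isClosed_of_not_countable hA hc
  exact not_countable_of_perfect hD hne (h.mono (subset_cbd_of_preperfect hD.acc hDA α))

end CantorBendixson

section Spheres

open Metric Topology

theorem exists_gt_closedBall_diff_ball_subset {α : Type*} [PseudoMetricSpace α] {U : Set α}
    {c : α} {r : ℝ} (hU : IsCompact Uᶜ) (h : sphere c r ⊆ U) :
    ∃ s > r, closedBall c s \ ball c r ⊆ U := by
  have hr : ((dist · c) '' Uᶜ)ᶜ ∈ 𝓝 r := by
    refine (hU.image (by fun_prop)).isClosed.isOpen_compl.mem_nhds ?_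
    rintro ⟨z, hz, hzr⟩
    exact hz (h hzr)
  obtain ⟨s, hs, hsub⟩ := mem_nhdsGE_iff_exists_Icc_subset.1 (mem_nhdsWithin_of_mem_nhds hr)
  refine ⟨s, hs, fun z hz ↦ ?_⟩
  by_contra hzU
  exact hsub ⟨not_lt.1 hz.2, hz.1⟩ ⟨z, hzU, rfl⟩

theorem exists_lt_disjoint_sphere {α : Type*} [PseudoMetricSpace α] {S U : Set α} {c : α}
    (hU : U ∈ 𝓝 c) (hS : (S ∩ U).Countable) {t : ℝ} (ht : 0 < t) :
    ∃ r, 0 < r ∧ r < t ∧ ball c r ⊆ U ∧ Disjoint S (sphere c r) := by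
  obtain ⟨ε, hε, hεU⟩ := Metric.mem_nhds_iff.1 hU
  have hdense : Dense ((dist · c) '' (S ∩ U))ᶜ := (hS.image _).dense_compl ℝ
  obtain ⟨r, hr, hr0, hrt⟩ := hdense.exists_between (lt_min ht hε)
  obtain ⟨hrt, hrε⟩ := lt_min_iff.1 hrt
  refine ⟨r, hr0, hrt, (ball_subset_ball hrε.le).trans hεU, Set.disjoint_left.2 fun z hz hzr ↦ ?_⟩
  exact hr ⟨z, ⟨hz, hεU (sphere_subset_ball hrε hzr)⟩, hzr⟩

theorem exists_seq_inter_ball_ssubset {α : Type*} [MetricSpace α] {S U : Set α} {c : α}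
    (hU : U ∈ 𝓝 c) (hS : (S ∩ U).Countable) (hc : c ∈ derivedSet S) :
    ∃ r : ℕ → ℝ, ∀ m, 0 < r m ∧ ball c (r m) ⊆ U ∧ Disjoint S (sphere c (r m)) ∧
      S ∩ ball c (r (m + 1)) ⊂ S ∩ ball c (r m) := by
  let Good := {r : ℝ // 0 < r ∧ ball c r ⊆ U ∧ Disjoint S (sphere c r)}
  have exists_next (r : Good) : ∃ r' : Good, S ∩ ball c r'.1 ⊂ S ∩ ball c r.1 := by
    obtain ⟨z, ⟨hzr, hzS⟩, hzc⟩ := accPt_iff_nhds.1 hc _ (ball_mem_nhds c r.2.1)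
    obtain ⟨r', hr'0, hr'z, hr'⟩ := exists_lt_disjoint_sphere hU hS (dist_pos.2 hzc)
    refine ⟨⟨r', hr'0, hr'⟩, Set.ssubset_iff_exists.2 ⟨?_, z, ⟨hzS, hzr⟩, fun hz ↦ ?_⟩⟩
    · exact Set.inter_subset_inter_right S (ball_subset_ball (hr'z.trans hzr).le)
    · exact hr'z.not_gt hz.2
  choose next hnext using exists_next
  obtain ⟨r₀, hr₀, -, hr₀'⟩ := exists_lt_disjoint_sphere hU hS one_pos
  let r (m : ℕ) : Good := next^[m] ⟨r₀, hr₀, hr₀'⟩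
  have hr (m : ℕ) : S ∩ ball c (r (m + 1)).1 ⊂ S ∩ ball c (r m).1 := by
    simpa only [r, Function.iterate_succ_apply'] using hnext (r m)
  exact ⟨fun m ↦ (r m).1, fun m ↦ ⟨(r m).2.1, (r m).2.2.1, (r m).2.2.2, hr m⟩⟩

end Spheres

section Resolvent

variable {R A : Type*} [CommRing R] [Ring A] [Algebra R A] {a b : A}

theorem commute_resolvent (h : Commute b a) (z : R) : Commute b (resolvent a z) := by
  have hc : Commute b (algebraMap R A z - a) := (Algebra.commute_algebraMap_right z b).sub_right h
  by_cases hz : z ∈ resolventSet R a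
  · rw [spectrum.resolvent_eq hz]
    exact Commute.units_inv_right (u := hz.unit) hc
  · rw [resolvent, Ring.inverse_non_unit _ hz]
    exact Commute.zero_right b

theorem sub_mul_resolvent {z : R} (hz : z ∈ resolventSet R a) (w : R) :
    (algebraMap R A w - a) * resolvent a z = 1 - (z - w) • resolvent a z := by
  calc (algebraMap R A w - a) * resolvent a z
      = (algebraMap R A z - a) * resolvent a z - algebraMap R A (z - w) * resolvent a z := by
        rw [← sub_mul, map_sub]; congr 1; abel
    _ = 1 - (z - w) • resolvent a z := by
        rw [resolvent, Ring.mul_inverse_cancel _ hz, Algebra.smul_def]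

end Resolvent

section CircleIntegral

theorem circleIntegral_comp_comm {E F : Type*} [NormedAddCommGroup E] [NormedSpace ℂ E]
    [CompleteSpace E] [NormedAddCommGroup F] [NormedSpace ℂ F] [CompleteSpace F] (L : E →L[ℂ] F)
    {f : ℂ → E} {c : ℂ} {r : ℝ} (hf : CircleIntegrable f c r) :
    ∮ z in C(c, r), L (f z) = L (∮ z in C(c, r), f z) := by
  simpa only [circleIntegral, map_smul] using L.intervalIntegral_comp_comm hf.out

variable {A : Type*} [NormedRing A] [NormedAlgebra ℂ A] [CompleteSpace A]

theorem mul_circleIntegral (b : A) {f : ℂ → A} {c : ℂ} {r : ℝ} (hf : CircleIntegrable f c r) :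
    b * ∮ z in C(c, r), f z = ∮ z in C(c, r), b * f z :=
  (circleIntegral_comp_comm (ContinuousLinearMap.mul ℂ A b) hf).symm

theorem commute_circleIntegral {b : A} {f : ℂ → A} (h : ∀ z, Commute b (f z)) (c : ℂ) (r : ℝ) :
    Commute b (∮ z in C(c, r), f z) := by
  by_cases hf : CircleIntegrable f c r
  · have hmul := circleIntegral_comp_comm ((ContinuousLinearMap.mul ℂ A).flip b) hf
    simp only [ContinuousLinearMap.flip_apply, ContinuousLinearMap.mul_apply'] at hmul
    rw [Commute, SemiconjBy, mul_circleIntegral b hf, ← hmul]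
    simp only [(h _).eq]
  · rw [circleIntegral.integral_undef hf]
    exact Commute.zero_right b

end CircleIntegral

section RieszProjection

open Metric

variable {A : Type*} [NormedRing A] [NormedAlgebra ℂ A]

/-- The Riesz projection of `a` along the circle `|z - c| = r`. It is meaningful when the circle
lies in the resolvent set of `a`, outside of which `resolvent a` takes the junk value `0`. -/
noncomputable def rieszProjection (a : A) (c : ℂ) (r : ℝ) : A :=
  (2 * Real.pi * Complex.I : ℂ)⁻¹ • ∮ z in C(c, r), resolvent a z

/-- The Cauchy transform at `w` of the resolvent of `a` along the circle `|z - c| = r`. Up to sign,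
it inverts `w - a` on one of the two pieces cut out by `rieszProjection a c r`. -/
noncomputable def resolventCauchyTransform (a : A) (c : ℂ) (r : ℝ) (w : ℂ) : A :=
  (2 * Real.pi * Complex.I : ℂ)⁻¹ • ∮ z in C(c, r), (z - w)⁻¹ • resolvent a z

variable [CompleteSpace A] {a b : A} {c w : ℂ} {r s : ℝ}

theorem commute_rieszProjection (h : Commute b a) (c : ℂ) (r : ℝ) :
    Commute b (rieszProjection a c r) :=
  (commute_circleIntegral (commute_resolvent h) c r).smul_right _

theorem commute_resolventCauchyTransform (h : Commute b a) (c : ℂ) (r : ℝ) (w : ℂ) :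
    Commute b (resolventCauchyTransform a c r w) :=
  (commute_circleIntegral (fun z ↦ (commute_resolvent h z).smul_right _) c r).smul_right _

theorem differentiableOn_resolvent (a : A) :
    DifferentiableOn ℂ (resolvent a) (resolventSet ℂ a) := fun _ hz ↦
  (spectrum.hasDerivAt_resolvent_const_left hz).differentiableAt.differentiableWithinAt

theorem circleIntegrable_resolvent (hr : 0 ≤ r) (h : sphere c r ⊆ resolventSet ℂ a) :
    CircleIntegrable (resolvent a) c r :=
  ((differentiableOn_resolvent a).continuousOn.mono h).circleIntegrable hr

theorem sub_mul_resolventCauchyTransform (hr : 0 ≤ r) (h : sphere c r ⊆ resolventSet ℂ a)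
    (hw : w ∉ sphere c r) :
    (algebraMap ℂ A w - a) * resolventCauchyTransform a c r w =
      ((2 * Real.pi * Complex.I : ℂ)⁻¹ * ∮ z in C(c, r), (z - w)⁻¹) • (1 : A) -
        rieszProjection a c r := by
  have hne {z : ℂ} (hz : z ∈ sphere c r) : z - w ≠ 0 := sub_ne_zero.2 fun hzw ↦ hw (hzw ▸ hz)
  have hinv : ContinuousOn (fun z ↦ (z - w)⁻¹) (sphere c r) :=
    ContinuousOn.inv₀ (by fun_prop) fun _ ↦ hne
  have hres := (differentiableOn_resolvent a).continuousOn.mono h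
  have hint : (algebraMap ℂ A w - a) * ∮ z in C(c, r), (z - w)⁻¹ • resolvent a z =
      (∮ z in C(c, r), (z - w)⁻¹) • (1 : A) - ∮ z in C(c, r), resolvent a z := by
    have hintRes : CircleIntegrable (fun z ↦ (z - w)⁻¹ • resolvent a z) c r :=
      (hinv.smul hres).circleIntegrable hr
    have hintOne : CircleIntegrable (fun z ↦ (z - w)⁻¹ • (1 : A)) c r :=
      (hinv.smul continuousOn_const).circleIntegrable hr
    rw [mul_circleIntegral _ hintRes, ← circleIntegral.integral_smul_const,
      ← circleIntegral.integral_sub hintOne (circleIntegrable_resolvent hr h)]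
    refine circleIntegral.integral_congr hr fun z hz ↦ ?_
    rw [mul_smul_comm, sub_mul_resolvent (h hz), smul_sub, inv_smul_smul₀ (hne hz)]
  rw [resolventCauchyTransform, rieszProjection, mul_smul_comm, hint, smul_sub, mul_smul]

theorem sub_mul_resolventCauchyTransform_of_mem_ball (h : sphere c r ⊆ resolventSet ℂ a)
    (hw : w ∈ ball c r) :
    (algebraMap ℂ A w - a) * resolventCauchyTransform a c r w = 1 - rieszProjection a c r := by
  rw [sub_mul_resolventCauchyTransform (pos_of_mem_ball hw).le h (ne_of_lt hw),
    circleIntegral.integral_sub_inv_of_mem_ball hw, inv_mul_cancel₀ Complex.two_pi_I_ne_zero,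
    one_smul]

theorem sub_mul_resolventCauchyTransform_of_notMem_closedBall (hr : 0 ≤ r)
    (h : sphere c r ⊆ resolventSet ℂ a) (hw : w ∉ closedBall c r) :
    (algebraMap ℂ A w - a) * resolventCauchyTransform a c r w = -rieszProjection a c r := by
  have hd : DifferentiableOn ℂ (fun z ↦ (z - w)⁻¹) {w}ᶜ :=
    DifferentiableOn.inv (by fun_prop) fun z hz ↦ sub_ne_zero.2 hz
  have hzero : ∮ z in C(c, r), (z - w)⁻¹ = 0 :=
    (hd.diffContOnCl_ball (Set.subset_compl_singleton_iff.2 hw)).circleIntegral_eq_zero hr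
  rw [sub_mul_resolventCauchyTransform hr h (mt (sphere_subset_closedBall ·) hw), hzero, mul_zero,
    zero_smul, _root_.zero_sub]

theorem differentiableOn_resolventCauchyTransform (h : sphere c r ⊆ resolventSet ℂ a) :
    DifferentiableOn ℂ (resolventCauchyTransform a c r) (ball c r) := by
  rcases le_or_gt r 0 with hr | hr
  · simp only [ball_eq_empty.2 hr, differentiableOn_empty]
  · lift r to NNReal using hr.le
    rw [← eball_coe]
    exact (hasFPowerSeriesOn_cauchy_integral (circleIntegrable_resolvent r.2 h)
      (NNReal.coe_pos.1 hr)).differentiableOn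

theorem rieszProjection_eq_of_annulus_subset_resolventSet (hr : 0 < r) (hrs : r ≤ s)
    (h : closedBall c s \ ball c r ⊆ resolventSet ℂ a) :
    rieszProjection a c s = rieszProjection a c r := by
  have hd := differentiableOn_resolvent a
  rw [rieszProjection, Complex.circleIntegral_eq_of_differentiable_on_annulus_off_countable hr hrs
    Set.countable_empty (hd.continuousOn.mono h) fun z hz ↦ ?_, rieszProjection]
  have hz' : z ∈ closedBall c s \ ball c r :=
    ⟨ball_subset_closedBall hz.1.1, mt (ball_subset_closedBall ·) hz.1.2⟩
  exact hd.differentiableAt ((spectrum.isOpen_resolventSet a).mem_nhds (h hz'))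

theorem one_sub_rieszProjection_mul_resolvent (h : sphere c r ⊆ resolventSet ℂ a)
    (hw : w ∈ ball c r) (hwa : w ∈ resolventSet ℂ a) :
    (1 - rieszProjection a c r) * resolvent a w = resolventCauchyTransform a c r w := by
  have hcomm : Commute (algebraMap ℂ A w - a) (resolventCauchyTransform a c r w) :=
    commute_resolventCauchyTransform
      ((Algebra.commute_algebraMap_left w a).sub_left (Commute.refl a)) c r w
  rw [← sub_mul_resolventCauchyTransform_of_mem_ball h hw, hcomm.eq, mul_assoc, resolvent,
    Ring.mul_inverse_cancel _ hwa, mul_one]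

/-- With `P` computed on a slightly larger concentric circle, `(1 - P) * resolvent a` extends
holomorphically to the disc enclosed by that circle, so its integral along the original circle,
which is `(1 - P) * P` up to a factor, vanishes. -/
theorem isIdempotentElem_rieszProjection (hr : 0 < r) (h : sphere c r ⊆ resolventSet ℂ a) :
    IsIdempotentElem (rieszProjection a c r) := by
  obtain ⟨s, hrs, hann⟩ : ∃ s > r, closedBall c s \ ball c r ⊆ resolventSet ℂ a :=
    exists_gt_closedBall_diff_ball_subset (spectrum.isCompact a) h
  have hs : sphere c s ⊆ resolventSet ℂ a := fun z hz ↦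
    hann ⟨sphere_subset_closedBall hz, not_lt.2 (hrs.le.trans_eq hz.symm)⟩
  have hzero : (1 - rieszProjection a c s) * rieszProjection a c r = 0 := by
    rw [rieszProjection.eq_1 a c r, mul_smul_comm,
      mul_circleIntegral _ (circleIntegrable_resolvent hr.le h),
      circleIntegral.integral_congr hr.le fun z hz ↦
        one_sub_rieszProjection_mul_resolvent hs (sphere_subset_ball hrs hz) (h hz),
      ((differentiableOn_resolventCauchyTransform hs).diffContOnCl_ball
        (closedBall_subset_ball hrs)).circleIntegral_eq_zero hr.le, smul_zero]
  rw [rieszProjection_eq_of_annulus_subset_resolventSet hr hrs.le hann, sub_mul, one_mul,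
    sub_eq_zero] at hzero
  exact hzero.symm

end RieszProjection

section ReducingPair

omit [CompleteSpace X] in
theorem mem_resolventSet_restr {T S : X →L[ℂ] X} (hTS : Commute T S) {M : Submodule ℂ X}
    (hT : ∀ x ∈ M, T x ∈ M) (hS : ∀ x ∈ M, S x ∈ M) {w : ℂ}
    (h : ∀ x ∈ M, ((algebraMap ℂ (X →L[ℂ] X) w - T) * S) x = x) :
    w ∈ resolventSet ℂ (restr T M hT) := by
  have hcomm : Commute (algebraMap ℂ (X →L[ℂ] X) w - T) S :=
    (Algebra.commute_algebraMap_left w S).sub_left hTS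
  refine spectrum.mem_resolventSet_of_left_right_inverse (b := restr S M hS) (c := restr S M hS)
    ?_ ?_ <;> ext x
  · exact h x x.2
  · exact (DFunLike.congr_fun hcomm.eq (x : X)).symm.trans (h x x.2)

/-- `IsReducingPair T M N` says that `(M, N) ∈ Red T`: the closed `T`-invariant subspaces `M` and
`N` satisfy `X = M ⊕ N`. -/
structure IsReducingPair (T : X →L[ℂ] X) (M N : Submodule ℂ X) : Prop where
  map_mem_left : ∀ x ∈ M, T x ∈ M
  map_mem_right : ∀ x ∈ N, T x ∈ N
  isClosed_left : IsClosed (M : Set X)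
  isClosed_right : IsClosed (N : Set X)
  isCompl : IsCompl M N

theorem IsReducingPair.spectrum_eq_union {T : X →L[ℂ] X} {M N : Submodule ℂ X}
    (h : IsReducingPair T M N) :
    spectrum ℂ T = spectrum ℂ (restr T M h.map_mem_left) ∪
      spectrum ℂ (restr T N h.map_mem_right) := by
  have := h.isClosed_left.completeSpace_coe
  have := h.isClosed_right.completeSpace_coe
  ext w
  let e := Submodule.prodEquivOfIsCompl M N h.isCompl
  let D := Prod.map (algebraMap ℂ (M →L[ℂ] M) w - restr T M h.map_mem_left)
    (algebraMap ℂ (N →L[ℂ] N) w - restr T N h.map_mem_right)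
  have hconj : (algebraMap ℂ (X →L[ℂ] X) w - T) ∘ e = e ∘ D := by
    ext x
    change w • ((x.1 : X) + x.2) - T (x.1 + x.2) = (w • (x.1 : X) - T x.1) + (w • (x.2 : X) - T x.2)
    rw [smul_add, map_add, add_sub_add_comm]
  rw [← not_iff_not, Set.mem_union, not_or, spectrum.notMem_iff, spectrum.notMem_iff,
    spectrum.notMem_iff]
  simp only [ContinuousLinearMap.isUnit_iff_bijective]
  rw [← Prod.map_bijective, ← Function.Bijective.of_comp_iff _ e.bijective, hconj,
    Function.Bijective.of_comp_iff' e.bijective]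

omit [CompleteSpace X] in
theorem isReducingPair_ker_range {T P : X →L[ℂ] X} (hP : IsIdempotentElem P) (hPT : Commute P T) :
    IsReducingPair T P.ker P.range where
  map_mem_left := (ContinuousLinearMap.IsIdempotentElem.commute_iff hP |>.1 hPT).2
  map_mem_right := (ContinuousLinearMap.IsIdempotentElem.commute_iff hP |>.1 hPT).1
  isClosed_left := P.isClosed_ker
  isClosed_right := ContinuousLinearMap.IsIdempotentElem.isClosed_range hP
  isCompl := (ContinuousLinearMap.IsIdempotentElem.isTopCompl hP).isCompl.symm

variable {T : X →L[ℂ] X} {c : ℂ} {r : ℝ}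

open Metric

theorem isReducingPair_rieszProjection (hr : 0 < r) (h : sphere c r ⊆ resolventSet ℂ T) :
    IsReducingPair T (rieszProjection T c r).ker (rieszProjection T c r).range :=
  isReducingPair_ker_range (isIdempotentElem_rieszProjection hr h)
    (commute_rieszProjection (Commute.refl T) c r).symm

theorem ball_subset_resolventSet_restr_ker_rieszProjection (hr : 0 < r)
    (h : sphere c r ⊆ resolventSet ℂ T) :
    ball c r ⊆ resolventSet ℂ (restr T (rieszProjection T c r).ker
      (isReducingPair_rieszProjection hr h).map_mem_left) := by
  intro w hw
  have hTC := commute_resolventCauchyTransform (Commute.refl T) c r w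
  have hC := isReducingPair_ker_range (isIdempotentElem_rieszProjection hr h)
    (commute_rieszProjection hTC.symm c r).symm
  refine mem_resolventSet_restr hTC _ hC.map_mem_left fun x (hx : rieszProjection T c r x = 0) ↦ ?_
  rw [sub_mul_resolventCauchyTransform_of_mem_ball h hw, _root_.sub_apply, hx,
    _root_.sub_zero, one_apply_eq_self]

theorem compl_closedBall_subset_resolventSet_restr_range_rieszProjection (hr : 0 < r)
    (h : sphere c r ⊆ resolventSet ℂ T) :
    (closedBall c r)ᶜ ⊆ resolventSet ℂ (restr T (rieszProjection T c r).range
      (isReducingPair_rieszProjection hr h).map_mem_right) := by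
  intro w hw
  have hP := isIdempotentElem_rieszProjection hr h
  have hTC := (commute_resolventCauchyTransform (Commute.refl T) c r w).neg_right
  have hC := isReducingPair_ker_range hP (commute_rieszProjection hTC.symm c r).symm
  refine mem_resolventSet_restr hTC _ hC.map_mem_right ?_
  rintro _ ⟨x, rfl⟩
  rw [mul_neg, sub_mul_resolventCauchyTransform_of_notMem_closedBall hr.le h hw, neg_neg]
  exact DFunLike.congr_fun hP.eq x

theorem exists_isReducingPair_spectrum_eq (hr : 0 < r)
    (h : Disjoint (spectrum ℂ T) (sphere c r)) :
    ∃ (M N : Submodule ℂ X) (hMN : IsReducingPair T M N),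
      spectrum ℂ (restr T M hMN.map_mem_left) = spectrum ℂ T \ ball c r ∧
      spectrum ℂ (restr T N hMN.map_mem_right) = spectrum ℂ T ∩ ball c r := by
  have hres : sphere c r ⊆ resolventSet ℂ T := fun z hz ↦
    spectrum.notMem_iff.1 (h.notMem_of_mem_right hz)
  have hMN := isReducingPair_rieszProjection hr hres
  have hM (w) (hw : w ∈ spectrum ℂ (restr T _ hMN.map_mem_left)) : w ∉ ball c r :=
    fun hwr ↦ hw (ball_subset_resolventSet_restr_ker_rieszProjection hr hres hwr)
  have hN (w) (hw : w ∈ spectrum ℂ (restr T _ hMN.map_mem_right)) : w ∈ closedBall c r :=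
    by_contra fun hwr ↦
      hw (compl_closedBall_subset_resolventSet_restr_range_rieszProjection hr hres hwr)
  have hNball (w) (hw : w ∈ spectrum ℂ (restr T _ hMN.map_mem_right)) : w ∈ ball c r := by
    have hwT : w ∈ spectrum ℂ T := hMN.spectrum_eq_union ▸ Or.inr hw
    exact lt_of_le_of_ne (hN w hw) (h.notMem_of_mem_left hwT)
  refine ⟨_, _, hMN, ?_, ?_⟩ <;> rw [hMN.spectrum_eq_union] <;> ext w <;> grind

end ReducingPair

theorem GInv.exists_mem_nhds_zero {β : Ordinal} {T : X →L[ℂ] X} (h : GInv β T) :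
    ∃ U ∈ nhds (0 : ℂ), (spectrum ℂ T ∩ U).Countable ∧ cbd (spectrum ℂ T ∩ U) β ⊆ {0} := by
  obtain ⟨M, N, hM, hN, hMc, hNc, hMN, hunit, hcbd⟩ := h
  have := hMc.completeSpace_coe
  have := hNc.completeSpace_coe
  have hred : IsReducingPair T M N := ⟨hM, hN, hMc, hNc, hMN⟩
  have hsub : spectrum ℂ T ∩ (spectrum ℂ (restr T M hM))ᶜ ⊆ spectrum ℂ (restr T N hN) := by
    rintro w ⟨hwT, hwM⟩
    rw [hred.spectrum_eq_union] at hwT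
    exact hwT.resolve_left hwM
  have hMclosed := spectrum.isClosed (𝕜 := ℂ) (restr T M hM)
  have hNclosed := spectrum.isClosed (𝕜 := ℂ) (restr T N hN)
  have hcount : (spectrum ℂ (restr T N hN)).Countable :=
    countable_of_countable_cbd hNclosed ((countable_singleton 0).mono hcbd)
  exact ⟨_, hMclosed.isOpen_compl.mem_nhds ((spectrum.zero_notMem_iff ℂ).2 hunit),
    hcount.mono hsub, (cbd_mono hsub β).trans hcbd⟩

/-- If `T` is `g_σ^{β+1}`-invertible and not generalized Drazin invertible
(`0 ∈ acc σ(T)`), then there is a sequence of pairs in `Red T` witnessing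
`g_σ^{β+1}`-invertibility, with strictly increasing spectra on the first components,
strictly decreasing spectra on the second components, and disjoint spectra. -/
theorem exists_seq_of_gInv (T : X →L[ℂ] X) (β : Ordinal)
    (hg : GInv β T) (h0 : (0 : ℂ) ∈ derivedSet (spectrum ℂ T)) :
    ∃ (M N : ℕ → Submodule ℂ X) (hM : ∀ m, ∀ x ∈ M m, T x ∈ M m)
      (hN : ∀ m, ∀ x ∈ N m, T x ∈ N m), ∀ m : ℕ,
        IsClosed (M m : Set X) ∧ IsClosed (N m : Set X) ∧ IsCompl (M m) (N m) ∧
        IsUnit (restr T (M m) (hM m)) ∧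
        cbd (spectrum ℂ (restr T (N m) (hN m))) β ⊆ {0} ∧
        spectrum ℂ (restr T (M m) (hM m)) ⊂ spectrum ℂ (restr T (M (m+1)) (hM (m+1))) ∧
        spectrum ℂ (restr T (N (m+1)) (hN (m+1))) ⊂ spectrum ℂ (restr T (N m) (hN m)) ∧
        spectrum ℂ (restr T (M m) (hM m)) ∩ spectrum ℂ (restr T (N m) (hN m)) = ∅ := by
  obtain ⟨U, hU, hcount, hcbd⟩ := hg.exists_mem_nhds_zero
  obtain ⟨r, hr⟩ := exists_seq_inter_ball_ssubset hU hcount h0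
  choose hr_pos hr_sub hr_disj hr_ssub using hr
  choose M N hMN hσM hσN using fun m ↦ exists_isReducingPair_spectrum_eq (hr_pos m) (hr_disj m)
  refine ⟨M, N, fun m ↦ (hMN m).map_mem_left, fun m ↦ (hMN m).map_mem_right, fun m ↦
    ⟨(hMN m).isClosed_left, (hMN m).isClosed_right, (hMN m).isCompl, ?_, ?_, ?_, ?_, ?_⟩⟩
  · rw [← spectrum.zero_notMem_iff ℂ, hσM]
    exact fun h ↦ h.2 (Metric.mem_ball_self (hr_pos m))
  · rw [hσN]
    exact (cbd_mono (inter_subset_inter_right _ (hr_sub m)) β).trans hcbd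
  · rw [hσM, hσM]
    exact sdiff_ssubset_sdiff_of_inter_ssubset_inter (hr_ssub m)
  · rw [hσN, hσN]
    exact hr_ssub m
  · rw [hσM, hσN]
    exact (disjoint_sdiff_left.mono_right inter_subset_right).inter_eq
end

section
/- Let X be a complex Banach space and T a bounded linear operator on X. Then T is almost invertible if and only if there exists a bounded linear operator S on X with ST = TS, S²T = S, and σ(T − T²S) at most countable. -/
/-!
A topological decomposition `E = M ⊕ N` turns pairs `(A, B)` of operators on `M` and `N` into
block diagonal operators on `E`. This is a homomorphism of algebras that reflects invertibility,
so `σ(A ⊕ B) = σ(A) ∪ σ(B)`. If `T = A ⊕ B` with `A` invertible, take `S = A⁻¹ ⊕ 0`; then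
`T - T²S = 0 ⊕ B`. Conversely, `P = TS` is an idempotent commuting with `T`; on its range `S`
inverts `T`, and `T - T²S = T(1 - P)` is `0 ⊕ T_N` for `N = ker P`. Either way the spectrum of
`T - T²S` is that of the second block, up to the point `0`.
-/

open Ordinal Set

variable {X : Type*} [NormedAddCommGroup X] [NormedSpace ℂ X] [CompleteSpace X]

/-- `T` is almost invertible: there is `(M, N) ∈ Red T` (a pair of closed
`T`-invariant subspaces with `X = M ⊕ N`) such that `T_M` is invertible and
`σ(T_N)` is at most countable. -/
def AlmostInv (T : X →L[ℂ] X) : Prop :=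
  ∃ (M N : Submodule ℂ X) (hM : ∀ x ∈ M, T x ∈ M) (hN : ∀ x ∈ N, T x ∈ N),
    IsClosed (M : Set X) ∧ IsClosed (N : Set X) ∧ IsCompl M N ∧
    IsUnit (restr T M hM) ∧ (spectrum ℂ (restr T N hN)).Countable

theorem countable_spectrum_zero {𝕜 A : Type*} [Field 𝕜] [Ring A] [Algebra 𝕜 A] :
    (spectrum 𝕜 (0 : A)).Countable := by
  rcases subsingleton_or_nontrivial A with _ | _
  · simp only [spectrum.of_subsingleton, countable_empty]
  · simp only [spectrum.zero_eq, countable_singleton]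

theorem isIdempotentElem_mul_of_mul_mul_eq {G : Type*} [Semigroup G] {s t : G}
    (hcomm : Commute s t) (hs : s * s * t = s) : IsIdempotentElem (t * s) :=
  calc t * s * (t * s) = t * (s * s * t) := by rw [mul_assoc, mul_assoc, hcomm.eq]
    _ = t * s := by rw [hs]

section RangeOfIdempotent

open ContinuousLinearMap

variable {R E : Type*} [Ring R] [TopologicalSpace E] [AddCommGroup E] [Module R E]
  {S T : E →L[R] E}

theorem isUnit_restrict_range_mul (hcomm : Commute S T) (hTS : IsIdempotentElem (T * S))
    (hT : ∀ x ∈ (T * S).range, T x ∈ (T * S).range) :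
    IsUnit (T.restrict hT) := by
  have hS : ∀ x ∈ (T * S).range, S x ∈ (T * S).range :=
    (hTS.commute_iff.1 (hcomm.symm.mul_left (Commute.refl S))).1
  have hTS_apply : ∀ x ∈ (T * S).range, T (S x) = x := fun _ hx =>
    (LinearMap.IsIdempotentElem.mem_range_iff hTS.toLinearMap).1 hx
  refine isUnit_iff_exists.2 ⟨S.restrict hS, ?_, ?_⟩
  · ext x
    exact hTS_apply x x.2
  · ext x
    exact (DFunLike.congr_fun hcomm.eq (x : E)).trans (hTS_apply x x.2)

end RangeOfIdempotent

section BlockDiagonal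

open Submodule ContinuousLinearMap

variable {R E : Type*} [CommRing R] [TopologicalSpace R] [TopologicalSpace E] [AddCommGroup E]
  [Module R E] [IsTopologicalAddGroup E] [ContinuousSMul R E] {M N : Submodule R E}
  {P T : E →L[R] E}

/-- The block diagonal operator `A ⊕ B` on `E = M ⊕ N` built from operators `A` on `M` and `B` on
`N`, as an algebra homomorphism in the pair `(A, B)`. -/
noncomputable def blockDiag (h : IsTopCompl M N) :
    ((M →L[R] M) × (N →L[R] N)) →ₐ[R] (E →L[R] E) :=
  AlgHom.ofLinearMap
    { toFun := fun A => ofIsTopCompl h (M.subtypeL ∘L A.1) (N.subtypeL ∘L A.2)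
      map_add' := fun A B => by
        simp only [Prod.fst_add, Prod.snd_add, comp_add, ofIsTopCompl_add]
      map_smul' := fun c A => ofIsTopCompl_eq h (fun x => by simp) (fun x => by simp) }
    (ofIsTopCompl_eq h (fun x => by simp) (fun x => by simp))
    (fun A B => ofIsTopCompl_eq h (fun x => by simp) (fun x => by simp))

theorem blockDiag_eq_iff (h : IsTopCompl M N) {A : M →L[R] M} {B : N →L[R] N} :
    blockDiag h (A, B) = T ↔ (∀ x : M, (A x : E) = T x) ∧ ∀ x : N, (B x : E) = T x := by
  refine ⟨?_, fun hT => ofIsTopCompl_eq h hT.1 hT.2⟩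
  rintro rfl
  exact ⟨fun x => (ofIsTopCompl_apply_left h (M.subtypeL ∘L A) (N.subtypeL ∘L B) x).symm,
    fun x => (ofIsTopCompl_apply_right h (M.subtypeL ∘L A) (N.subtypeL ∘L B) x).symm⟩

theorem blockDiag_symm (h : IsTopCompl M N) (A : M →L[R] M) (B : N →L[R] N) :
    blockDiag h.symm (B, A) = blockDiag h (A, B) :=
  ((blockDiag_eq_iff h).2 ((blockDiag_eq_iff h.symm).1 rfl).symm).symm

theorem projectionOntoL_comp_blockDiag (h : IsTopCompl M N) (A : M →L[R] M) (B : N →L[R] N) :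
    M.projectionOntoL N h ∘L blockDiag h (A, B) = A ∘L M.projectionOntoL N h := by
  have h_sum : blockDiag h (A, B) = (M.subtypeL ∘L A) ∘L M.projectionOntoL N h +
      (N.subtypeL ∘L B) ∘L N.projectionOntoL M h.symm := ofIsTopCompl_eq_add h _ _
  ext x
  simp [h_sum]

theorem blockDiag_comp_subtypeL (h : IsTopCompl M N) (A : M →L[R] M) (B : N →L[R] N) :
    blockDiag h (A, B) ∘L M.subtypeL = M.subtypeL ∘L A :=
  ContinuousLinearMap.ext fun x => (((blockDiag_eq_iff h).1 rfl).1 x).symm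

theorem isUnit_fst_of_isUnit_blockDiag (h : IsTopCompl M N) {A : M →L[R] M} {B : N →L[R] N}
    (hAB : IsUnit (blockDiag h (A, B))) : IsUnit A := by
  obtain ⟨V, hV_right, hV_left⟩ := isUnit_iff_exists.1 hAB
  have hπ : M.projectionOntoL N h ∘L M.subtypeL = 1 := by ext x; simp
  refine isUnit_iff_exists.2 ⟨M.projectionOntoL N h ∘L V ∘L M.subtypeL, ?_, ?_⟩
  · calc A ∘L M.projectionOntoL N h ∘L V ∘L M.subtypeL
        = (M.projectionOntoL N h ∘L blockDiag h (A, B)) ∘L V ∘L M.subtypeL := by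
          rw [projectionOntoL_comp_blockDiag, comp_assoc]
      _ = M.projectionOntoL N h ∘L (blockDiag h (A, B) * V) ∘L M.subtypeL := rfl
      _ = 1 := by rw [hV_right, one_def, id_comp, hπ, one_def]
  · calc (M.projectionOntoL N h ∘L V ∘L M.subtypeL) ∘L A
        = M.projectionOntoL N h ∘L V ∘L blockDiag h (A, B) ∘L M.subtypeL := by
          rw [blockDiag_comp_subtypeL]; simp only [comp_assoc]
      _ = M.projectionOntoL N h ∘L (V * blockDiag h (A, B)) ∘L M.subtypeL := rfl
      _ = 1 := by rw [hV_left, one_def, id_comp, hπ, one_def]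

theorem isUnit_blockDiag (h : IsTopCompl M N) {A : (M →L[R] M) × (N →L[R] N)} :
    IsUnit (blockDiag h A) ↔ IsUnit A := by
  refine ⟨fun hA => Prod.isUnit_iff.2 ⟨isUnit_fst_of_isUnit_blockDiag h hA, ?_⟩,
    fun hA => hA.map (blockDiag h)⟩
  exact isUnit_fst_of_isUnit_blockDiag h.symm (by rwa [blockDiag_symm])

theorem spectrum_blockDiag (h : IsTopCompl M N) (A : M →L[R] M) (B : N →L[R] N) :
    spectrum R (blockDiag h (A, B)) = spectrum R A ∪ spectrum R B := by
  rw [← Prod.spectrum_eq]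
  ext z
  rw [spectrum.mem_iff, spectrum.mem_iff, ← isUnit_blockDiag h, map_sub, AlgHom.commutes]

theorem blockDiag_zero_restrict_ker (hP : IsIdempotentElem P) (hT : ∀ x ∈ P.ker, T x ∈ P.ker) :
    blockDiag hP.isTopCompl (0, T.restrict hT) = T * (1 - P) := by
  refine (blockDiag_eq_iff _).2 ⟨?_, ?_⟩
  · rintro ⟨x, hx⟩
    have hPx : P x = x := (LinearMap.IsIdempotentElem.mem_range_iff hP.toLinearMap).1 hx
    simp [hPx]
  · rintro ⟨x, hx⟩
    have hPx : P x = 0 := hx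
    simp [hPx]

theorem spectrum_restrict_ker_subset (hP : IsIdempotentElem P) (hT : ∀ x ∈ P.ker, T x ∈ P.ker) :
    spectrum R (T.restrict hT) ⊆ spectrum R (T * (1 - P)) := by
  rw [← blockDiag_zero_restrict_ker hP hT, spectrum_blockDiag]
  exact subset_union_right

end BlockDiagonal

theorem AlmostInv.exists_pseudoinverse {T : X →L[ℂ] X} (hT : AlmostInv T) :
    ∃ S : X →L[ℂ] X, S * T = T * S ∧ S * S * T = S ∧
      (spectrum ℂ (T - T * T * S)).Countable := by
  obtain ⟨M, N, hM, hN, hM_closed, hN_closed, hMN, ⟨A, hA⟩, hσ⟩ := hT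
  have h := Submodule.IsCompl.isTopCompl_of_isClosed hMN hM_closed hN_closed
  have hT_blocks : blockDiag h (↑A, restr T N hN) = T := by
    rw [hA]
    exact (blockDiag_eq_iff h).2 ⟨fun _ => rfl, fun _ => rfl⟩
  refine ⟨blockDiag h (↑A⁻¹, 0), ?_, ?_, ?_⟩
  · rw [← hT_blocks, ← map_mul, ← map_mul]
    simp
  · rw [← hT_blocks, ← map_mul, ← map_mul]
    simp
  · have hdiff : T - T * T * blockDiag h (↑A⁻¹, 0) = blockDiag h (0, restr T N hN) :=
      calc T - T * T * blockDiag h (↑A⁻¹, 0)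
          = blockDiag h ((↑A, restr T N hN) -
              (↑A, restr T N hN) * (↑A, restr T N hN) * (↑A⁻¹, 0)) := by
            rw [map_sub, map_mul, map_mul, hT_blocks]
        _ = blockDiag h (0, restr T N hN) := by simp
    rw [hdiff, spectrum_blockDiag]
    exact countable_spectrum_zero.union hσ

open ContinuousLinearMap in
theorem almostInv_of_pseudoinverse {F : Type*} [NormedAddCommGroup F] [NormedSpace ℂ F]
    {S T : F →L[ℂ] F} (hcomm : Commute S T) (hS : S * S * T = S)
    (hσ : (spectrum ℂ (T - T * T * S)).Countable) : AlmostInv T := by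
  have hP : IsIdempotentElem (T * S) := isIdempotentElem_mul_of_mul_mul_eq hcomm hS
  obtain ⟨hM, hN⟩ := hP.commute_iff.1 ((Commute.refl T).mul_left hcomm)
  rw [mul_assoc, ← mul_one_sub] at hσ
  exact ⟨(T * S).range, (T * S).ker, hM, hN, hP.isClosed_range, isClosed_ker _,
    hP.isTopCompl.isCompl, isUnit_restrict_range_mul hcomm hP hM,
    hσ.mono (spectrum_restrict_ker_subset hP hN)⟩

/-- `T` is almost invertible iff there is `S` commuting with `T` with `S²T = S` and
`σ(T - T²S)` at most countable. -/
theorem almostInv_iff_exists_pseudoinverse (T : X →L[ℂ] X) :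
    AlmostInv T ↔
      ∃ S : X →L[ℂ] X, S * T = T * S ∧ S * S * T = S ∧
        (spectrum ℂ (T - T * T * S)).Countable :=
  ⟨AlmostInv.exists_pseudoinverse, fun ⟨_, hcomm, hS, hσ⟩ =>
    almostInv_of_pseudoinverse hcomm hS hσ⟩
end

section
/- Let X be a complex Banach space, T a bounded linear operator on X, and m ≥ 1 an integer. Then T is almost invertible if and only if T^m is almost invertible. -/
open Ordinal Set

variable {X : Type*} [NormedAddCommGroup X] [NormedSpace ℂ X] [CompleteSpace X]

/-! `T` is almost invertible iff `σ(T)` is countable near `0`, a property which the spectral mapping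
theorem `σ(T ^ m) = σ(T) ^ m` transfers between `T` and `T ^ m`. In one direction,
`σ(T) ⊆ σ(T_M) ∪ σ(T_N)` and `0 ∉ σ(T_M)`. In the other, countability provides a small circle around
`0` that misses `σ(T)`, and the Riesz idempotent of that circle splits off the part of the spectrum
inside it.

After rescaling to the unit circle, this idempotent is the limit of `(1 - a ^ 2 ^ k)⁻¹`, which
replaces the contour integral: with `u = (1 - x)⁻¹`, `v = (1 + x)⁻¹` and `w = (1 - x²)⁻¹` one has
`w - u = (u² - u)(1 - 2v)` and `4(w² - w) = (u² - u) + (v² - v)`. Taking suprema over `x = c • a`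
with `‖c‖ = 1`, each squaring halves the failure to be idempotent, so the sequence converges
geometrically to an idempotent. -/

open Filter Metric
open scoped Ring Topology

section GeometricInverse

variable {R : Type*} [Ring R] {x : R}

lemma inverse_one_sub_mul_inverse_one_add (x : R) :
    (1 - x)⁻¹ʳ * (1 + x)⁻¹ʳ = (1 - x ^ 2)⁻¹ʳ := by
  have hfactor : (1 + x) * (1 - x) = 1 - x ^ 2 := by noncomm_ring
  have hcomm : Commute (1 + x) (1 - x) :=
    (Commute.one_left _).add_left ((Commute.one_right x).sub_right (Commute.refl x))
  rw [← hfactor, Ring.mul_inverse_rev' hcomm]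

lemma commute_inverse_one_sub_inverse_one_add (x : R) :
    Commute (1 - x)⁻¹ʳ (1 + x)⁻¹ʳ :=
  ((Commute.one_left _).sub_left
    ((Commute.one_right x).add_right (Commute.refl x))).ringInverse_ringInverse

lemma isUnit_one_sub_sq (hsub : IsUnit (1 - x)) (hadd : IsUnit (1 + x)) :
    IsUnit (1 - x ^ 2) := by
  have hfactor : 1 - x ^ 2 = (1 - x) * (1 + x) := by noncomm_ring
  exact hfactor ▸ hsub.mul hadd

lemma inverse_one_sub_add_inverse_one_add (hsub : IsUnit (1 - x)) (hadd : IsUnit (1 + x)) :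
    (1 - x)⁻¹ʳ + (1 + x)⁻¹ʳ = 2 • (1 - x ^ 2)⁻¹ʳ := by
  have htwo : (1 - x) + (1 + x) = 2 • 1 := by abel
  rw [Ring.inverse_add_inverse (iff_of_true hsub hadd), htwo, mul_smul_comm, mul_one,
    smul_mul_assoc, inverse_one_sub_mul_inverse_one_add]

lemma inverse_one_sub_sub_inverse_one_sub_sq (hsub : IsUnit (1 - x)) (hadd : IsUnit (1 + x)) :
    (1 - x)⁻¹ʳ - (1 - x ^ 2)⁻¹ʳ =
      ((1 - x)⁻¹ʳ ^ 2 - (1 - x)⁻¹ʳ) * (2 • (1 + x)⁻¹ʳ - 1) := by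
  have hsum := inverse_one_sub_add_inverse_one_add hsub hadd
  rw [← inverse_one_sub_mul_inverse_one_add] at hsum ⊢
  generalize (1 - x)⁻¹ʳ = u, (1 + x)⁻¹ʳ = v at hsum ⊢
  calc u - u * v = u * ((u + v) - u - 2 • v + 1) := by noncomm_ring
    _ = u * (2 • (u * v) - u - 2 • v + 1) := by rw [hsum]
    _ = (u ^ 2 - u) * (2 • v - 1) := by noncomm_ring

lemma four_nsmul_inverse_one_sub_sq_defect (hsub : IsUnit (1 - x)) (hadd : IsUnit (1 + x)) :
    4 • ((1 - x ^ 2)⁻¹ʳ ^ 2 - (1 - x ^ 2)⁻¹ʳ) =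
      ((1 - x)⁻¹ʳ ^ 2 - (1 - x)⁻¹ʳ) + ((1 + x)⁻¹ʳ ^ 2 - (1 + x)⁻¹ʳ) := by
  have hsum := inverse_one_sub_add_inverse_one_add hsub hadd
  have hcomm := commute_inverse_one_sub_inverse_one_add x
  have hprod := inverse_one_sub_mul_inverse_one_add x
  generalize (1 - x)⁻¹ʳ = u, (1 + x)⁻¹ʳ = v, (1 - x ^ 2)⁻¹ʳ = w at hsum hcomm hprod ⊢
  calc 4 • (w ^ 2 - w) = (2 • w) ^ 2 - 2 • w - 2 • w := by noncomm_ring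
    _ = (u + v) ^ 2 - (u + v) - 2 • (u * v) := by rw [hsum, hprod]
    _ = (u ^ 2 - u) + (v ^ 2 - v) := by rw [hcomm.add_sq]; noncomm_ring

end GeometricInverse

section UnitCircle

variable {A : Type*} [NormedRing A] [NormedAlgebra ℂ A] {x : A} {C D : ℝ}

/-- Uniform control of `(1 - y)⁻¹` over the orbit `y ∈ {c • x | ‖c‖ = 1}`: the inverse exists, is
bounded by `C`, and fails to be idempotent by at most `D`. -/
structure CircleInverseBound (x : A) (C D : ℝ) : Prop where
  isUnit (c : Circle) : IsUnit (1 - c • x)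
  norm_inverse_le (c : Circle) : ‖(1 - c • x)⁻¹ʳ‖ ≤ C
  norm_defect_le (c : Circle) : ‖(1 - c • x)⁻¹ʳ ^ 2 - (1 - c • x)⁻¹ʳ‖ ≤ D

lemma exists_circleInverseBound [CompleteSpace A] (h : ∀ c : Circle, IsUnit (1 - c • x)) :
    ∃ C D, CircleInverseBound x C D := by
  have hcont : Continuous fun c : Circle => (1 - c • x)⁻¹ʳ := by
    refine continuous_iff_continuousAt.mpr fun c => ?_
    have hinv : ContinuousAt Ring.inverse (1 - c • x) :=
      (h c).unit_spec ▸ NormedRing.inverse_continuousAt (h c).unit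
    exact hinv.comp (f := fun c : Circle => 1 - c • x) (by fun_prop)
  obtain ⟨C, hC⟩ := (isCompact_range hcont).isBounded.exists_norm_le
  obtain ⟨D, hD⟩ := (isCompact_range ((hcont.pow 2).sub hcont)).isBounded.exists_norm_le
  exact ⟨C, D, h, fun c => hC _ ⟨c, rfl⟩, fun c => hD _ ⟨c, rfl⟩⟩

namespace CircleInverseBound

lemma isUnit_one_add (h : CircleInverseBound x C D) (c : Circle) : IsUnit (1 + c • x) := by
  simpa [Circle.smul_def] using h.isUnit (-c)

lemma norm_inverse_one_add_le (h : CircleInverseBound x C D) (c : Circle) :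
    ‖(1 + c • x)⁻¹ʳ‖ ≤ C := by
  simpa [Circle.smul_def] using h.norm_inverse_le (-c)

lemma norm_defect_one_add_le (h : CircleInverseBound x C D) (c : Circle) :
    ‖(1 + c • x)⁻¹ʳ ^ 2 - (1 + c • x)⁻¹ʳ‖ ≤ D := by
  simpa [Circle.smul_def] using h.norm_defect_le (-c)

protected lemma sq (h : CircleInverseBound x C D) : CircleInverseBound (x ^ 2) C (D / 2) := by
  have smul_sq (c : Circle) : ∃ b : Circle, c • x ^ 2 = (b • x) ^ 2 := by
    obtain ⟨t, rfl⟩ := Circle.exp_surjective c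
    refine ⟨Circle.exp (t / 2), ?_⟩
    rw [smul_pow, ← Circle.exp_natCast_mul, Nat.cast_ofNat, mul_div_cancel₀ t two_ne_zero]
  constructor <;> intro c <;> obtain ⟨b, hb⟩ := smul_sq c <;> rw [hb]
  · exact isUnit_one_sub_sq (h.isUnit b) (h.isUnit_one_add b)
  · have hsum := congrArg norm <|
      inverse_one_sub_add_inverse_one_add (h.isUnit b) (h.isUnit_one_add b)
    rw [RCLike.norm_nsmul ℂ, _root_.nsmul_eq_mul, Nat.cast_ofNat] at hsum
    linarith [norm_add_le (1 - b • x)⁻¹ʳ (1 + b • x)⁻¹ʳ, h.norm_inverse_le b,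
      h.norm_inverse_one_add_le b]
  · have hdefect := congrArg norm <|
      four_nsmul_inverse_one_sub_sq_defect (h.isUnit b) (h.isUnit_one_add b)
    rw [RCLike.norm_nsmul ℂ, _root_.nsmul_eq_mul, Nat.cast_ofNat] at hdefect
    linarith [norm_add_le ((1 - b • x)⁻¹ʳ ^ 2 - (1 - b • x)⁻¹ʳ)
      ((1 + b • x)⁻¹ʳ ^ 2 - (1 + b • x)⁻¹ʳ), h.norm_defect_le b, h.norm_defect_one_add_le b]

lemma pow_two_pow (h : CircleInverseBound x C D) (k : ℕ) :
    CircleInverseBound (x ^ 2 ^ k) C (D / 2 ^ k) := by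
  induction k with
  | zero => simpa using h
  | succ k ih => simpa only [pow_succ (2 : ℕ), pow_succ (2 : ℝ), pow_mul, div_div] using ih.sq

lemma isUnit_one_sub (h : CircleInverseBound x C D) : IsUnit (1 - x) := by
  simpa using h.isUnit 1

lemma norm_defect_one_sub_le (h : CircleInverseBound x C D) :
    ‖(1 - x)⁻¹ʳ ^ 2 - (1 - x)⁻¹ʳ‖ ≤ D := by
  simpa using h.norm_defect_le 1

lemma norm_inverse_sub_inverse_sq_le (h : CircleInverseBound x C D) :
    ‖(1 - x)⁻¹ʳ - (1 - x ^ 2)⁻¹ʳ‖ ≤ D * (2 * C + ‖(1 : A)‖) := by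
  have hadd : IsUnit (1 + x) := by simpa using h.isUnit_one_add 1
  have hC : ‖(1 + x)⁻¹ʳ‖ ≤ C := by simpa using h.norm_inverse_one_add_le 1
  have hD := h.norm_defect_one_sub_le
  have hfactor : ‖2 • (1 + x)⁻¹ʳ - 1‖ ≤ 2 * C + ‖(1 : A)‖ := by
    calc ‖2 • (1 + x)⁻¹ʳ - 1‖ ≤ ‖2 • (1 + x)⁻¹ʳ‖ + ‖(1 : A)‖ := norm_sub_le _ _
      _ = 2 * ‖(1 + x)⁻¹ʳ‖ + ‖(1 : A)‖ := by
        rw [RCLike.norm_nsmul ℂ, _root_.nsmul_eq_mul, Nat.cast_ofNat]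
      _ ≤ 2 * C + ‖(1 : A)‖ := by gcongr
  rw [inverse_one_sub_sub_inverse_one_sub_sq h.isUnit_one_sub hadd]
  exact norm_mul_le_of_le hD hfactor

lemma exists_tendsto_inverse_one_sub_pow [CompleteSpace A] (h : CircleInverseBound x C D) :
    ∃ p : A, IsIdempotentElem p ∧ Tendsto (fun k => (1 - x ^ 2 ^ k)⁻¹ʳ) atTop (𝓝 p) := by
  set q : ℕ → A := fun k => (1 - x ^ 2 ^ k)⁻¹ʳ
  have hdist (k : ℕ) : dist (q k) (q (k + 1)) ≤ D * (2 * C + ‖(1 : A)‖) * (1 / 2) ^ k := by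
    rw [dist_eq_norm]
    refine (pow_mul x (2 ^ k) 2 ▸ (h.pow_two_pow k).norm_inverse_sub_inverse_sq_le).trans_eq ?_
    rw [one_div, inv_pow]
    ring
  obtain ⟨p, hp⟩ := cauchySeq_tendsto_of_complete
    (cauchySeq_of_le_geometric (1 / 2) _ one_half_lt_one hdist)
  have hdefect : Tendsto (fun k => q k ^ 2 - q k) atTop (𝓝 0) :=
    squeeze_zero_norm (fun k => (h.pow_two_pow k).norm_defect_one_sub_le)
      (tendsto_const_nhds.div_atTop (tendsto_pow_atTop_atTop_of_one_lt one_lt_two))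
  have hidem : p ^ 2 - p = 0 := tendsto_nhds_unique ((hp.pow 2).sub hp) hdefect
  exact ⟨p, by rwa [IsIdempotentElem, ← sq, ← sub_eq_zero], hp⟩

end CircleInverseBound

end UnitCircle

lemma commute_ringInverse {M : Type*} [MonoidWithZero M] {a b : M} (h : Commute a b) :
    Commute a b⁻¹ʳ := by
  by_cases hb : IsUnit b
  · obtain ⟨u, rfl⟩ := hb
    rw [Ring.inverse_unit]
    exact h.units_inv_right
  · rw [Ring.inverse_non_unit _ hb]
    exact Commute.zero_right _

lemma add_mul_one_sub_pow {R : Type*} [Ring R] {a p : R} (hp : IsIdempotentElem p)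
    (h : Commute a p) (n : ℕ) : (p + a * (1 - p)) ^ n = p + a ^ n * (1 - p) := by
  induction n with
  | zero => simp
  | succ n ih =>
    calc (p + a * (1 - p)) ^ (n + 1)
        = p * p + p * a * (1 - p) + a ^ n * ((1 - p) * p) + a ^ n * ((1 - p) * a * (1 - p)) := by
          rw [pow_succ, ih]; noncomm_ring
      _ = p * p + a * (p * (1 - p)) + a ^ n * ((1 - p) * p) +
            a ^ n * (a * ((1 - p) * (1 - p))) := by
          rw [← h.eq, ((Commute.one_right a).sub_right h).eq.symm, mul_assoc a, mul_assoc a]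
      _ = p + a ^ (n + 1) * (1 - p) := by
          rw [hp.eq, hp.mul_one_sub_self, hp.one_sub_mul_self, hp.one_sub.eq, pow_succ]
          noncomm_ring

section LimitIdempotent

variable {A ι : Type*} [NormedRing A] {a b p : A} {n : ι → ℕ} {l : Filter ι} [l.NeBot]

lemma commute_of_tendsto_inverse_one_sub_pow
    (hp : Tendsto (fun i => (1 - a ^ n i)⁻¹ʳ) l (𝓝 p)) (h : Commute b a) : Commute b p :=
  tendsto_nhds_unique (hp.const_mul b) <| (hp.mul_const b).congr fun i =>
    (commute_ringInverse ((Commute.one_right b).sub_right (h.pow_right (n i)))).eq.symm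

variable [CompleteSpace A]

-- `(p + a(1 - p)) ^ n = p + aⁿ(1 - p)` has the factor `(1 - aⁿ)⁻¹ - (1 - p)`, which tends to the
-- involution `2p - 1`.
lemma isUnit_add_mul_one_sub_of_tendsto (hn : ∀ i, n i ≠ 0)
    (hunit : ∀ i, IsUnit (1 - a ^ n i)) (hidem : IsIdempotentElem p)
    (hp : Tendsto (fun i => (1 - a ^ n i)⁻¹ʳ) l (𝓝 p)) : IsUnit (p + a * (1 - p)) := by
  have hinvol : (p - (1 - p)) ^ 2 = 1 := by
    calc (p - (1 - p)) ^ 2 = 4 • (p * p) - 4 • p + 1 := by noncomm_ring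
      _ = 1 := by rw [hidem.eq]; abel
  have hlim : Tendsto (fun i => (1 - a ^ n i)⁻¹ʳ - (1 - p)) l (𝓝 (p - (1 - p))) :=
    hp.sub_const _
  have hnhds : {x : A | IsUnit x} ∈ 𝓝 (p - (1 - p)) :=
    Units.isOpen.mem_nhds (.of_pow_eq_one hinvol two_ne_zero)
  obtain ⟨i, hi⟩ := (hlim.eventually hnhds).exists
  have hfactor : p + a ^ n i * (1 - p) =
      (1 - a ^ n i) * ((1 - a ^ n i)⁻¹ʳ - (1 - p)) := by
    rw [_root_.mul_sub (1 - a ^ n i), Ring.mul_inverse_cancel _ (hunit i)]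
    noncomm_ring
  rw [← isUnit_pow_iff (hn i), add_mul_one_sub_pow hidem
    (commute_of_tendsto_inverse_one_sub_pow hp (Commute.refl a)), hfactor]
  exact (hunit i).mul hi

lemma tendsto_pow_mul_of_tendsto_inverse_one_sub_pow
    (hunit : ∀ i, IsUnit (1 - a ^ n i)) (hidem : IsIdempotentElem p)
    (hp : Tendsto (fun i => (1 - a ^ n i)⁻¹ʳ) l (𝓝 p)) :
    Tendsto (fun i => a ^ n i * p) l (𝓝 0) := by
  set q : ι → A := fun i => (1 - a ^ n i)⁻¹ʳ
  have hpow (i : ι) : a ^ n i * q i = q i - 1 := by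
    calc a ^ n i * q i = q i - (1 - a ^ n i) * q i := by noncomm_ring
      _ = q i - 1 := by rw [Ring.mul_inverse_cancel _ (hunit i)]
  have hcomm (i : ι) : Commute p (q i) :=
    commute_ringInverse ((Commute.one_right p).sub_right
      ((commute_of_tendsto_inverse_one_sub_pow hp (Commute.refl a)).symm.pow_right _))
  have hw : Tendsto (fun i => q i * p + (1 - p)) l (𝓝 1) := by
    simpa [hidem.eq] using (hp.mul_const p).add_const (1 - p)
  have hinv : Tendsto (fun i => (q i * p + (1 - p))⁻¹ʳ) l (𝓝 1) := by
    have hcont := NormedRing.inverse_continuousAt (1 : Aˣ)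
    rw [ContinuousAt, Units.val_one, Ring.inverse_one] at hcont
    exact hcont.comp hw
  have hzero : Tendsto (fun i => (q i - 1) * p) l (𝓝 0) := by
    simpa [sub_mul, hidem.eq] using (hp.sub_const 1).mul_const p
  have hunits : ∀ᶠ i in l, IsUnit (q i * p + (1 - p)) :=
    hw.eventually (Units.isOpen.mem_nhds isUnit_one)
  have hmul (i : ι) : a ^ n i * p * (q i * p + (1 - p)) = (q i - 1) * p := by
    calc a ^ n i * p * (q i * p + (1 - p))
        = a ^ n i * (p * q i) * p + a ^ n i * (p * (1 - p)) := by noncomm_ring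
      _ = a ^ n i * q i * (p * p) := by
          rw [(hcomm i).eq, hidem.mul_one_sub_self, mul_zero, add_zero]; noncomm_ring
      _ = (q i - 1) * p := by rw [hpow, hidem.eq]
  rw [← zero_mul (1 : A)]
  refine (hzero.mul hinv).congr' (hunits.mono fun i hi => ?_)
  rw [← hmul, Ring.mul_inverse_cancel_right _ _ hi]

lemma norm_lt_one_of_mem_spectrum_mul_of_tendsto {𝕜 : Type*} [NormedField 𝕜]
    [NormedAlgebra 𝕜 A] (hn : ∀ i, n i ≠ 0) (hunit : ∀ i, IsUnit (1 - a ^ n i))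
    (hidem : IsIdempotentElem p) (hp : Tendsto (fun i => (1 - a ^ n i)⁻¹ʳ) l (𝓝 p)) {z : 𝕜}
    (hz : z ∈ spectrum 𝕜 (a * p)) : ‖z‖ < 1 := by
  have hlim : Tendsto (fun i => ‖a ^ n i * p‖ * ‖(1 : A)‖) l (𝓝 0) := by
    simpa using (tendsto_pow_mul_of_tendsto_inverse_one_sub_pow hunit hidem hp).norm.mul_const
      ‖(1 : A)‖
  obtain ⟨i, hi⟩ := (hlim.eventually (gt_mem_nhds one_pos)).exists
  have hcomm := commute_of_tendsto_inverse_one_sub_pow hp (Commute.refl a)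
  have hpow : (a * p) ^ n i = a ^ n i * p := by rw [hcomm.mul_pow, hidem.pow_eq (hn i)]
  have hzpow : z ^ n i ∈ spectrum 𝕜 (a ^ n i * p) := hpow ▸ spectrum.pow_mem_pow _ _ hz
  rw [← pow_lt_one_iff_of_nonneg (norm_nonneg z) (hn i), ← norm_pow]
  exact (spectrum.norm_le_norm_mul_of_mem hzpow).trans_lt hi

end LimitIdempotent

section RieszIdempotent

variable {A : Type*} [NormedRing A] [NormedAlgebra ℂ A] [CompleteSpace A]

lemma exists_idempotent_of_isUnit_one_sub_circle_smul {a : A}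
    (h : ∀ c : Circle, IsUnit (1 - c • a)) :
    ∃ p : A, IsIdempotentElem p ∧ Commute a p ∧ IsUnit (p + a * (1 - p)) ∧
      ∀ z ∈ spectrum ℂ (a * p), ‖z‖ < 1 := by
  obtain ⟨C, D, hbound⟩ := exists_circleInverseBound h
  obtain ⟨p, hidem, hp⟩ := hbound.exists_tendsto_inverse_one_sub_pow
  have hn (k : ℕ) : 2 ^ k ≠ 0 := (Nat.two_pow_pos k).ne'
  have hunit (k : ℕ) : IsUnit (1 - a ^ 2 ^ k) := (hbound.pow_two_pow k).isUnit_one_sub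
  exact ⟨p, hidem, commute_of_tendsto_inverse_one_sub_pow hp (Commute.refl a),
    isUnit_add_mul_one_sub_of_tendsto hn hunit hidem hp,
    fun z hz => norm_lt_one_of_mem_spectrum_mul_of_tendsto hn hunit hidem hp hz⟩

theorem exists_riesz_idempotent {a : A} {r : ℝ} (hr : 0 < r)
    (h : Disjoint (spectrum ℂ a) (sphere 0 r)) :
    ∃ p : A, IsIdempotentElem p ∧ Commute a p ∧ IsUnit ((r : ℂ) • p + a * (1 - p)) ∧
      spectrum ℂ (a * p) ⊆ ball 0 r := by
  set s : ℂˣ := Units.mk0 r (Complex.ofReal_ne_zero.mpr hr.ne')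
  have hs : ‖(s : ℂ)‖ = r := Complex.norm_of_nonneg hr.le
  have hcircle (c : Circle) : IsUnit (1 - c • s⁻¹ • a) := by
    set u : ℂˣ := s * (Circle.toUnits c)⁻¹
    have hu : (u : ℂ) ∈ sphere 0 r := by simp [u, hs, Circle.norm_coe]
    have hunit : IsUnit (u • (1 : A) - a) := by
      simpa [Units.smul_def, Algebra.algebraMap_eq_smul_one] using
        spectrum.notMem_iff.mp (h.notMem_of_mem_right hu)
    have hsmul : u⁻¹ • a = c • s⁻¹ • a := by
      rw [mul_inv_rev, inv_inv, mul_smul]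
      rfl
    exact hsmul ▸ (IsUnit.smul_sub_iff_sub_inv_smul u a).mp hunit
  obtain ⟨p, hidem, hcomm, hunit, hspec⟩ := exists_idempotent_of_isUnit_one_sub_circle_smul hcircle
  refine ⟨p, hidem, by simpa using hcomm.smul_left s, ?_, ?_⟩
  · have hscale : (r : ℂ) • p + a * (1 - p) = s • (p + s⁻¹ • a * (1 - p)) := by
      rw [smul_add, smul_mul_assoc, smul_inv_smul]
      rfl
    exact hscale ▸ hunit.smul s
  · have hscale : a * p = s • (s⁻¹ • a * p) := by rw [smul_mul_assoc, smul_inv_smul]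
    rw [hscale, spectrum.unit_smul_eq_smul]
    rintro _ ⟨z, hz, rfl⟩
    have hz' := hspec z hz
    simpa [Units.smul_def, hs] using mul_lt_of_lt_one_right hr hz'

end RieszIdempotent

section Restriction

variable {E : Type*} [NormedAddCommGroup E] [NormedSpace ℂ E] {T u q : E →L[ℂ] E}
  {M N : Submodule ℂ E}

lemma restr_eq_of_eqOn {S : E →L[ℂ] E} (hT : ∀ x ∈ M, T x ∈ M) (hS : ∀ x ∈ M, S x ∈ M)
    (h : ∀ x ∈ M, T x = S x) : restr T M hT = restr S M hS :=
  ContinuousLinearMap.ext fun x => Subtype.ext (h x x.2)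

lemma algebraMap_sub_mem (hM : ∀ x ∈ M, T x ∈ M) (z : ℂ) :
    ∀ x ∈ M, (algebraMap ℂ (E →L[ℂ] E) z - T) x ∈ M :=
  fun x hx => M.sub_mem (M.smul_mem z hx) (hM x hx)

lemma restr_algebraMap_sub (hM : ∀ x ∈ M, T x ∈ M) (z : ℂ) :
    restr (algebraMap ℂ (E →L[ℂ] E) z - T) M (algebraMap_sub_mem hM z) =
      algebraMap ℂ (M →L[ℂ] M) z - restr T M hM :=
  rfl

lemma mem_ker_of_commute (h : Commute T q) : ∀ x ∈ q.ker, T x ∈ q.ker := by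
  intro x hx
  calc q (T x) = T (q x) := (DFunLike.congr_fun h.eq x).symm
    _ = T 0 := congrArg T hx
    _ = 0 := map_zero T

lemma isUnit_restr_ker (hu : IsUnit u) (h : Commute u q) :
    IsUnit (restr u q.ker (mem_ker_of_commute h)) := by
  obtain ⟨u, rfl⟩ := hu
  let v := restr (↑u⁻¹ : E →L[ℂ] E) q.ker (mem_ker_of_commute h.units_inv_left)
  refine ⟨⟨_, v, ?_, ?_⟩, rfl⟩ <;> ext x
  · exact DFunLike.congr_fun u.mul_inv (x : E)
  · exact DFunLike.congr_fun u.inv_mul (x : E)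

lemma spectrum_restr_ker_subset (h : Commute T q) :
    spectrum ℂ (restr T q.ker (mem_ker_of_commute h)) ⊆ spectrum ℂ T := by
  intro z
  contrapose
  intro hz
  rw [spectrum.notMem_iff] at hz
  rw [spectrum.notMem_iff, ← restr_algebraMap_sub]
  exact isUnit_restr_ker hz ((Algebra.commute_algebraMap_left z q).sub_left h)

lemma isCompl_ker_ker_one_sub {p : E →L[ℂ] E} (hp : IsIdempotentElem p) :
    IsCompl p.ker (1 - p).ker := by
  have hlin := ContinuousLinearMap.IsIdempotentElem.toLinearMap hp
  have hrange : p.range = (1 - p).ker := LinearMap.IsIdempotentElem.range_eq_ker_one_sub hlin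
  exact (hrange ▸ LinearMap.IsIdempotentElem.isCompl hlin).symm

lemma bijective_of_isUnit_restr {hM : ∀ x ∈ M, T x ∈ M} (h : IsUnit (restr T M hM)) :
    Function.Bijective (restr T M hM) :=
  (Module.End.isUnit_iff _).mp (h.map ContinuousLinearMap.toLinearMapRingHom)

variable [CompleteSpace E]

lemma isUnit_of_isUnit_restr (hMN : IsCompl M N) {hM : ∀ x ∈ M, T x ∈ M}
    {hN : ∀ x ∈ N, T x ∈ N} (hTM : IsUnit (restr T M hM)) (hTN : IsUnit (restr T N hN)) :
    IsUnit T := by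
  let e := M.prodEquivOfIsCompl N hMN
  have hsemi (x : M × N) : T (e x) = e (Prod.map (restr T M hM) (restr T N hN) x) :=
    map_add T (x.1 : E) x.2
  have hprod := (bijective_of_isUnit_restr hTM).prodMap (bijective_of_isUnit_restr hTN)
  rw [ContinuousLinearMap.isUnit_iff_bijective, ← e.bijective.of_comp_iff T]
  exact (funext hsemi : T ∘ e = _) ▸ e.bijective.comp hprod

lemma spectrum_subset_union_spectrum_restr (hMN : IsCompl M N) (hM : ∀ x ∈ M, T x ∈ M)
    (hN : ∀ x ∈ N, T x ∈ N) :
    spectrum ℂ T ⊆ spectrum ℂ (restr T M hM) ∪ spectrum ℂ (restr T N hN) := by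
  intro z
  contrapose!
  intro hz
  rw [mem_union, not_or, spectrum.notMem_iff, spectrum.notMem_iff, ← restr_algebraMap_sub,
    ← restr_algebraMap_sub] at hz
  exact spectrum.notMem_iff.mpr (isUnit_of_isUnit_restr hMN hz.1 hz.2)

end Restriction

lemma exists_disjoint_sphere_of_countable {E : Type*} [SeminormedAddGroup E] {s : Set E} {ε : ℝ}
    (hε : 0 < ε) (hs : (s ∩ ball 0 ε).Countable) :
    ∃ r ∈ Ioo 0 ε, Disjoint s (sphere 0 r) := by
  obtain ⟨r, hr, hr0, hrε⟩ := ((hs.image norm).dense_compl ℝ).exists_between hε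
  refine ⟨r, ⟨hr0, hrε⟩, disjoint_left.mpr fun z hzs hzr => hr ⟨z, ⟨hzs, ?_⟩, ?_⟩⟩
  · exact sphere_subset_ball hrε hzr
  · exact mem_sphere_zero_iff_norm.mp hzr

lemma countable_preimage_pow {R : Type*} [CommRing R] [IsDomain R] {s : Set R} (hs : s.Countable)
    {n : ℕ} (hn : 0 < n) : ((· ^ n) ⁻¹' s : Set R).Countable := by
  rw [← biUnion_preimage_singleton]
  refine hs.biUnion fun w _ => (Multiset.finite_toSet (Polynomial.nthRoots n w)).countable.mono ?_
  exact fun z hz => (Polynomial.mem_nthRoots hn).mpr hz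

lemma exists_disjoint_spectrum_ball {𝕜 A : Type*} [NormedField 𝕜] [NormedRing A]
    [NormedAlgebra 𝕜 A] [CompleteSpace A] {a : A} (ha : IsUnit a) :
    ∃ ε > 0, Disjoint (spectrum 𝕜 a) (ball 0 ε) := by
  obtain ⟨ε, hε, hball⟩ := Metric.mem_nhds_iff.mp <|
    (spectrum.isClosed (𝕜 := 𝕜) a).isOpen_compl.mem_nhds ((spectrum.zero_notMem_iff 𝕜).mpr ha)
  exact ⟨ε, hε, disjoint_compl_right.mono_right hball⟩

section AlmostInvertible

variable {E : Type*} [NormedAddCommGroup E] [NormedSpace ℂ E] [CompleteSpace E] {T : E →L[ℂ] E}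

lemma AlmostInv.exists_countable_spectrum_inter_ball (h : AlmostInv T) :
    ∃ ε > 0, (spectrum ℂ T ∩ ball 0 ε).Countable := by
  obtain ⟨M, N, hM, hN, hMclosed, -, hMN, hunit, hcount⟩ := h
  have : CompleteSpace M := hMclosed.completeSpace_coe
  obtain ⟨ε, hε, hdisj⟩ := exists_disjoint_spectrum_ball (𝕜 := ℂ) (A := M →L[ℂ] M) hunit
  refine ⟨ε, hε, hcount.mono fun z hz => ?_⟩
  exact (spectrum_subset_union_spectrum_restr hMN hM hN hz.1).resolve_left
    (hdisj.notMem_of_mem_right hz.2)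

lemma almostInv_of_disjoint_sphere {r : ℝ} (hr : 0 < r)
    (hcount : (spectrum ℂ T ∩ ball 0 r).Countable) (hdisj : Disjoint (spectrum ℂ T) (sphere 0 r)) :
    AlmostInv T := by
  obtain ⟨p, hidem, hcomm, hunit, hspec⟩ := exists_riesz_idempotent hr hdisj
  have hcomm' : Commute T (1 - p) := (Commute.one_right T).sub_right hcomm
  have hS : Commute ((r : ℂ) • p + T * (1 - p)) p :=
    ((Commute.refl p).smul_left _).add_left
      (hcomm.mul_left ((Commute.one_left p).sub_left (Commute.refl p)))
  have hTp : Commute (T * p) (1 - p) :=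
    hcomm'.mul_left ((Commute.one_right p).sub_right (Commute.refl p))
  have hM : restr T p.ker (mem_ker_of_commute hcomm) = restr _ p.ker (mem_ker_of_commute hS) :=
    restr_eq_of_eqOn _ _ fun x hx => by
      have hpx : p x = 0 := hx
      simp [hpx]
  have hN : restr T (1 - p).ker (mem_ker_of_commute hcomm') =
      restr (T * p) (1 - p).ker (mem_ker_of_commute hTp) :=
    restr_eq_of_eqOn _ _ fun x hx => congrArg T (sub_eq_zero.mp hx)
  refine ⟨p.ker, (1 - p).ker, mem_ker_of_commute hcomm, mem_ker_of_commute hcomm',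
    p.isClosed_ker, (1 - p).isClosed_ker, isCompl_ker_ker_one_sub hidem,
    hM ▸ isUnit_restr_ker hunit hS, ?_⟩
  refine hcount.mono (subset_inter (spectrum_restr_ker_subset hcomm') ?_)
  exact (hN ▸ spectrum_restr_ker_subset hTp).trans hspec

theorem almostInv_iff_exists_countable_spectrum_inter_ball :
    AlmostInv T ↔ ∃ ε > 0, (spectrum ℂ T ∩ ball 0 ε).Countable := by
  refine ⟨AlmostInv.exists_countable_spectrum_inter_ball, fun ⟨ε, hε, hcount⟩ => ?_⟩
  obtain ⟨r, ⟨hr, hrε⟩, hdisj⟩ := exists_disjoint_sphere_of_countable hε hcount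
  exact almostInv_of_disjoint_sphere hr
    (hcount.mono (inter_subset_inter_right _ (ball_subset_ball hrε.le))) hdisj

end AlmostInvertible

lemma exists_countable_image_pow_inter_ball_iff {K : Type*} [NormedField K] {s : Set K} {m : ℕ}
    (hm : 0 < m) :
    (∃ ε > 0, ((· ^ m) '' s ∩ ball 0 ε).Countable) ↔ ∃ ε > 0, (s ∩ ball 0 ε).Countable := by
  constructor <;> rintro ⟨ε, hε, hcount⟩
  · refine ⟨min 1 ε, lt_min one_pos hε, (countable_preimage_pow hcount hm).mono ?_⟩
    rintro z ⟨hzs, hz⟩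
    rw [mem_ball_zero_iff, lt_min_iff] at hz
    refine ⟨mem_image_of_mem _ hzs, mem_ball_zero_iff.mpr ?_⟩
    calc ‖z ^ m‖ = ‖z‖ ^ m := norm_pow z m
      _ ≤ ‖z‖ := pow_le_of_le_one (norm_nonneg z) hz.1.le hm.ne'
      _ < ε := hz.2
  · refine ⟨ε ^ m, pow_pos hε m, (hcount.image (· ^ m)).mono ?_⟩
    rintro _ ⟨⟨z, hzs, rfl⟩, hz⟩
    refine mem_image_of_mem _ ⟨hzs, mem_ball_zero_iff.mpr ?_⟩
    rwa [mem_ball_zero_iff, norm_pow, pow_lt_pow_iff_left₀ (norm_nonneg z) hε.le hm.ne'] at hz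

/-- `T` is almost invertible iff `T^m` is almost invertible, for `m ≥ 1`. -/
theorem almostInv_pow_iff (T : X →L[ℂ] X) (m : ℕ) (hm : 1 ≤ m) :
    AlmostInv T ↔ AlmostInv (T ^ m) := by
  rw [almostInv_iff_exists_countable_spectrum_inter_ball,
    almostInv_iff_exists_countable_spectrum_inter_ball, spectrum.map_pow_of_pos T hm,
    exists_countable_image_pow_inter_ball_iff hm]
end

section
/- Let X be a complex Banach space and let T, R be bounded linear operators on X such that TR = RT = 0. If both T and R are almost invertible, then T + R is almost invertible. -/
open Ordinal Set

variable {X : Type*} [NormedAddCommGroup X] [NormedSpace ℂ X] [CompleteSpace X]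

/-!
If `T` and `R` are reduced by `(M₁, N₁)` and `(M₂, N₂)`, then `T + R` is reduced by
`(M₁ ⊔ M₂, N₁ ⊓ N₂)`: from `TR = RT = 0` and the invertibility of `T` on `M₁` and of `R` on `M₂`
one gets `M₂ ≤ ker T ≤ N₁` and `M₁ ≤ ker R ≤ N₂`. On `M₁ ⊔ M₂` the sum acts as `T_{M₁} ⊕ R_{M₂}`.
On `N₁ ⊓ N₂` the identity `(λ - T)(λ - R) = λ(λ - (T + R))` confines the spectrum of `T + R` to
the union of those of `T` and `R`, and these are no larger than on `N₁` and on `N₂`: `M₂` is a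
`T`-invariant complement of `N₁ ⊓ N₂` in `N₁`, and `M₁` is an `R`-invariant one in `N₂`. Continuity
of the inverses and closedness of `M₁ ⊔ M₂` come from `T_{M₁}⁻¹ T`, a continuous projection of
`T⁻¹(M₁) = M₁ ⊕ ker T` onto `M₁`.
-/

theorem isCompl_sup_inf_of_le {α : Type*} [Lattice α] [BoundedOrder α] [IsModularLattice α]
    {a b c d : α} (hab : IsCompl a b) (hcd : IsCompl c d) (hcb : c ≤ b) :
    IsCompl (a ⊔ c) (b ⊓ d) := by
  constructor
  · have h : (a ⊔ c) ⊓ b = c := by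
      rw [sup_comm, sup_inf_assoc_of_le a hcb, hab.inf_eq_bot, sup_bot_eq]
    rw [disjoint_iff, ← inf_assoc, h, hcd.inf_eq_bot]
  · have h : c ⊔ b ⊓ d = b := by
      rw [inf_comm, ← sup_inf_assoc_of_le d hcb, hcd.sup_eq_top, top_inf_eq]
    rw [codisjoint_iff, sup_assoc, h, hab.sup_eq_top]

theorem mem_of_apply_mem_of_isCompl {A V F : Type*} [Ring A] [AddCommGroup V] [Module A V]
    [FunLike F V V] [AddMonoidHomClass F V V] {f : F} {p q : Submodule A V} (hpq : IsCompl p q)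
    (hp : ∀ x ∈ p, f x ∈ p) (hq : ∀ x ∈ q, f x ∈ q) (hf : ∀ x ∈ p, f x = 0 → x = 0) {x : V}
    (hx : f x ∈ q) : x ∈ q := by
  have hxpq : x ∈ p ⊔ q := hpq.sup_eq_top ▸ Submodule.mem_top
  obtain ⟨y, hy, z, hz, rfl⟩ := Submodule.mem_sup.1 hxpq
  have hfy : f y ∈ q := by rwa [map_add, q.add_mem_iff_left (hq z hz)] at hx
  have hy0 : y = 0 := hf y hy (Submodule.disjoint_def.1 hpq.disjoint _ (hp y hy) hfy)
  rwa [hy0, zero_add]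

theorem apply_mem_of_mem_sup {A V F : Type*} [Semiring A] [AddCommMonoid V] [Module A V]
    [FunLike F V V] [AddMonoidHomClass F V V] {f : F} {p q : Submodule A V}
    (hp : ∀ x ∈ p, f x ∈ p) (hq : ∀ x ∈ q, f x = 0) : ∀ x ∈ p ⊔ q, f x ∈ p := by
  intro x hx
  obtain ⟨y, hy, z, hz, rfl⟩ := Submodule.mem_sup.1 hx
  rw [map_add, hq z hz, add_zero]
  exact hp y hy

theorem spectrum_add_subset_of_mul_eq_zero {𝕜 A : Type*} [CommRing 𝕜] [Ring A] [Algebra 𝕜 A]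
    {a b : A} (hab : a * b = 0) : spectrum 𝕜 (a + b) ⊆ spectrum 𝕜 a ∪ spectrum 𝕜 b := by
  intro l hl
  by_contra hl'
  simp only [mem_union, not_or, spectrum.notMem_iff] at hl'
  obtain ⟨ha, hb⟩ := hl'
  have hfactor : (algebraMap 𝕜 A l - a) * (algebraMap 𝕜 A l - b) =
      algebraMap 𝕜 A l * (algebraMap 𝕜 A l - (a + b)) := by
    linear_combination (norm := noncomm_ring) Algebra.commutes l a + hab
  have hcomm : Commute (algebraMap 𝕜 A l) (algebraMap 𝕜 A l - (a + b)) := Algebra.commutes _ _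
  exact hl (hcomm.isUnit_mul_iff.1 (hfactor ▸ ha.mul hb)).2

section Restriction

variable {E : Type*} [NormedAddCommGroup E] [NormedSpace ℂ E] {T R : E →L[ℂ] E}
  {M N K P : Submodule ℂ E}

theorem isUnit_restr_iff {hM : ∀ x ∈ M, T x ∈ M} :
    IsUnit (restr T M hM) ↔ ∃ S : M →L[ℂ] M, ∀ x y : M, T x = y ↔ S y = x := by
  constructor
  · rintro ⟨u, hu⟩
    have hT (x : M) : (u.1 x : E) = T x := congrArg (fun f : M →L[ℂ] M ↦ (f x : E)) hu
    refine ⟨↑u⁻¹, fun x y ↦ ?_⟩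
    rw [← hT, Subtype.coe_inj]
    constructor
    · rintro rfl
      exact DFunLike.congr_fun u.inv_mul x
    · rintro rfl
      exact DFunLike.congr_fun u.mul_inv y
  · rintro ⟨S, hS⟩
    refine isUnit_iff_exists.2 ⟨S, ?_, ?_⟩ <;> ext x
    · exact (hS (S x) x).2 rfl
    · exact congrArg Subtype.val ((hS x (restr T M hM x)).1 rfl)

theorem eq_zero_of_isUnit_restr {hM : ∀ x ∈ M, T x ∈ M} (hT : IsUnit (restr T M hM)) :
    ∀ x ∈ M, T x = 0 → x = 0 := by
  obtain ⟨S, hS⟩ := isUnit_restr_iff.1 hT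
  intro x hx hTx
  have h := (hS ⟨x, hx⟩ 0).1 hTx
  rw [map_zero] at h
  exact (congrArg Subtype.val h).symm

theorem apply_eq_zero_of_isUnit_restr {hM : ∀ x ∈ M, T x ∈ M} (hT : IsUnit (restr T M hM))
    (hRT : R * T = 0) : ∀ x ∈ M, R x = 0 := by
  obtain ⟨S, hS⟩ := isUnit_restr_iff.1 hT
  intro x hx
  have h : T (S ⟨x, hx⟩) = x := (hS _ ⟨x, hx⟩).2 rfl
  rw [← h]
  exact DFunLike.congr_fun hRT _

theorem mem_of_apply_eq_zero_of_isUnit_restr {hM : ∀ x ∈ M, T x ∈ M} (hT : IsUnit (restr T M hM))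
    (hMN : IsCompl M N) (hN : ∀ x ∈ N, T x ∈ N) {x : E} (hx : T x = 0) : x ∈ N :=
  mem_of_apply_mem_of_isCompl hMN hM hN (eq_zero_of_isUnit_restr hT) (hx ▸ N.zero_mem)

theorem isUnit_restr_of_le {hN : ∀ x ∈ N, T x ∈ N} (hT : IsUnit (restr T N hN)) (hKN : K ≤ N)
    (hK : ∀ x ∈ K, T x ∈ K) (hTK : ∀ x ∈ N, T x ∈ K → x ∈ K) : IsUnit (restr T K hK) := by
  obtain ⟨S, hS⟩ := isUnit_restr_iff.1 hT
  have hSK (x : N) (hx : (x : E) ∈ K) : (S x : E) ∈ K := by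
    refine hTK _ (S x).2 ?_
    rwa [(hS (S x) x).2 rfl]
  let ι : K →L[ℂ] N := K.subtypeL.codRestrict N fun x ↦ hKN x.2
  refine isUnit_restr_iff.2
    ⟨(N.subtypeL ∘L S ∘L ι).codRestrict K fun x ↦ hSK _ x.2, fun x y ↦ ?_⟩
  exact (hS (ι x) (ι y)).trans (by rw [Subtype.ext_iff, Subtype.ext_iff]; rfl)

theorem spectrum_restr_subset_of_eq_inf (hMN : IsCompl M N) (hM : ∀ x ∈ M, T x ∈ M)
    (hN : ∀ x ∈ N, T x ∈ N) (hP : ∀ x ∈ P, T x ∈ P) (hK : ∀ x ∈ K, T x ∈ K) (hMP : M ≤ P)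
    (hKP : K = P ⊓ N) : spectrum ℂ (restr T K hK) ⊆ spectrum ℂ (restr T P hP) := by
  subst hKP
  intro l hl
  by_contra hlP
  let A : E →L[ℂ] E := algebraMap ℂ _ l - T
  have hA {V : Submodule ℂ E} (hV : ∀ x ∈ V, T x ∈ V) : ∀ x ∈ V, A x ∈ V :=
    fun x hx ↦ V.sub_mem (V.smul_mem l hx) (hV x hx)
  have hAP : IsUnit (restr A P (hA hP)) := spectrum.notMem_iff.1 hlP
  have hAM : ∀ x ∈ M, A x = 0 → x = 0 := fun x hx ↦ eq_zero_of_isUnit_restr hAP x (hMP hx)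
  have hAN : ∀ x ∈ P, A x ∈ P ⊓ N → x ∈ P ⊓ N := fun x hx hAx ↦
    ⟨hx, mem_of_apply_mem_of_isCompl (f := A) hMN (hA hM) (hA hN) hAM hAx.2⟩
  exact hl (isUnit_restr_of_le hAP inf_le_left (hA hK) hAN)

theorem spectrum_restr_add_subset (hTR : T * R = 0) (hT : ∀ x ∈ K, T x ∈ K)
    (hR : ∀ x ∈ K, R x ∈ K) (hK : ∀ x ∈ K, (T + R) x ∈ K) :
    spectrum ℂ (restr (T + R) K hK) ⊆
      spectrum ℂ (restr T K hT) ∪ spectrum ℂ (restr R K hR) := by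
  have hmul : restr T K hT * restr R K hR = 0 := by
    ext x
    exact DFunLike.congr_fun hTR (x : E)
  have hadd : restr (T + R) K hK = restr T K hT + restr R K hR := rfl
  rw [hadd]
  exact spectrum_add_subset_of_mul_eq_zero hmul

theorem exists_projection_of_isUnit_restr {hM : ∀ x ∈ M, T x ∈ M} (hT : IsUnit (restr T M hM))
    (hN : ∀ x ∈ N, T x ∈ M) : ∃ π : N →L[ℂ] M, ∀ (x : N) (m : M), T x = T m ↔ π x = m := by
  obtain ⟨S, hS⟩ := isUnit_restr_iff.1 hT
  exact ⟨S ∘L T.restrict hN, fun x m ↦ eq_comm.trans (hS m (T.restrict hN x))⟩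

theorem isClosed_sup_of_isUnit_restr {hM : ∀ x ∈ M, T x ∈ M} (hT : IsUnit (restr T M hM))
    (hMc : IsClosed (M : Set E)) (hPc : IsClosed (P : Set E)) (hTP : ∀ x ∈ P, T x = 0) :
    IsClosed ((M ⊔ P : Submodule ℂ E) : Set E) := by
  let W : Submodule ℂ E := M.comap T.toLinearMap
  obtain ⟨π, hπ⟩ := exists_projection_of_isUnit_restr (N := W) hT fun _ hx ↦ hx
  have hW : IsClosed (W : Set E) := hMc.preimage T.continuous
  have hsup : ((M ⊔ P : Submodule ℂ E) : Set E) =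
      Subtype.val '' ((fun w : W ↦ (w : E) - π w) ⁻¹' P) := by
    ext x
    constructor
    · intro hx
      obtain ⟨m, hm, p, hp, rfl⟩ := Submodule.mem_sup.1 hx
      have hTm : T (m + p) = T m := by rw [map_add, hTP p hp, add_zero]
      have hmp : m + p ∈ W := show T (m + p) ∈ M from hTm ▸ hM m hm
      refine ⟨⟨m + p, hmp⟩, ?_, rfl⟩
      simpa [(hπ ⟨m + p, hmp⟩ ⟨m, hm⟩).1 hTm] using hp
    · rintro ⟨w, hw, rfl⟩
      simpa using Submodule.add_mem_sup (π w).2 hw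
  rw [hsup]
  exact hW.isClosedEmbedding_subtypeVal.isClosedMap _ (hPc.preimage (by fun_prop))

theorem isUnit_restr_add_sup {hM : ∀ x ∈ M, T x ∈ M} {hP : ∀ x ∈ P, R x ∈ P}
    (hT : IsUnit (restr T M hM)) (hR : IsUnit (restr R P hP)) (hTP : ∀ x ∈ P, T x = 0)
    (hRM : ∀ x ∈ M, R x = 0) (hMP : ∀ x ∈ M ⊔ P, (T + R) x ∈ M ⊔ P) :
    IsUnit (restr (T + R) (M ⊔ P) hMP) := by
  have hTadd (x : E) {p : E} (hp : p ∈ P) : T (x + p) = T x := by rw [map_add, hTP p hp, add_zero]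
  have hRadd (x : E) {m : E} (hm : m ∈ M) : R (m + x) = R x := by rw [map_add, hRM m hm, zero_add]
  have hTsup : ∀ x ∈ M ⊔ P, T x ∈ M := apply_mem_of_mem_sup hM hTP
  have hRsup : ∀ x ∈ M ⊔ P, R x ∈ P := sup_comm M P ▸ apply_mem_of_mem_sup hP hRM
  obtain ⟨π, hπ⟩ := exists_projection_of_isUnit_restr hT hTsup
  obtain ⟨ρ, hρ⟩ := exists_projection_of_isUnit_restr hR hRsup
  obtain ⟨S, hS⟩ := isUnit_restr_iff.1 hT
  obtain ⟨Q, hQ⟩ := isUnit_restr_iff.1 hR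
  have hπρ (x : ↥(M ⊔ P)) : (π x : E) + ρ x = x := by
    obtain ⟨m, hm, p, hp, hx⟩ := Submodule.mem_sup.1 x.2
    rw [(hπ x ⟨m, hm⟩).1 (hx ▸ hTadd m hp), (hρ x ⟨p, hp⟩).1 (hx ▸ hRadd p hm), hx]
  let V : ↥(M ⊔ P) →L[ℂ] E := M.subtypeL ∘L S ∘L π + P.subtypeL ∘L Q ∘L ρ
  have hV (x : ↥(M ⊔ P)) : V x ∈ M ⊔ P := Submodule.add_mem_sup (S (π x)).2 (Q (ρ x)).2
  refine isUnit_restr_iff.2 ⟨V.codRestrict _ hV, fun x y ↦ ⟨fun hxy ↦ ?_, ?_⟩⟩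
  · have hπy : π y = T.restrict hTsup x := (hπ _ _).1 (hxy ▸ hTadd _ (hRsup x x.2))
    have hρy : ρ y = R.restrict hRsup x := (hρ _ _).1 (hxy ▸ hRadd _ (hTsup x x.2))
    have hSy : S (π y) = π x := (hS _ _).1 (hπy ▸ ((hπ x _).2 rfl).symm)
    have hQy : Q (ρ y) = ρ x := (hQ _ _).1 (hρy ▸ ((hρ x _).2 rfl).symm)
    refine Subtype.ext ?_
    calc V y = (S (π y) : E) + Q (ρ y) := rfl
      _ = x := by rw [hSy, hQy, hπρ]
  · rintro rfl
    calc (T + R) (V y) = T (S (π y) + Q (ρ y)) + R (S (π y) + Q (ρ y)) := rfl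
      _ = T (S (π y)) + R (Q (ρ y)) := by rw [hTadd _ (Q (ρ y)).2, hRadd _ (S (π y)).2]
      _ = π y + ρ y := by rw [(hS _ (π y)).2 rfl, (hQ _ (ρ y)).2 rfl]
      _ = y := hπρ y

theorem almostInv_add_general (T R : E →L[ℂ] E) (hTR : T * R = 0) (hRT : R * T = 0)
    (hT : AlmostInv T) (hR : AlmostInv R) : AlmostInv (T + R) := by
  obtain ⟨M₁, N₁, hM₁, hN₁, hM₁c, hN₁c, hMN₁, hT, hσT⟩ := hT
  obtain ⟨M₂, N₂, hM₂, hN₂, hM₂c, hN₂c, hMN₂, hR, hσR⟩ := hR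
  have hRM₁ : ∀ x ∈ M₁, R x = 0 := apply_eq_zero_of_isUnit_restr hT hRT
  have hTM₂ : ∀ x ∈ M₂, T x = 0 := apply_eq_zero_of_isUnit_restr hR hTR
  have hkerT {x : E} : T x = 0 → x ∈ N₁ := mem_of_apply_eq_zero_of_isUnit_restr hT hMN₁ hN₁
  have hkerR {x : E} : R x = 0 → x ∈ N₂ := mem_of_apply_eq_zero_of_isUnit_restr hR hMN₂ hN₂
  have hRN₁ (x : E) : R x ∈ N₁ := hkerT (DFunLike.congr_fun hTR x)
  have hTN₂ (x : E) : T x ∈ N₂ := hkerR (DFunLike.congr_fun hRT x)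
  have hTK : ∀ x ∈ N₁ ⊓ N₂, T x ∈ N₁ ⊓ N₂ := fun x hx ↦ ⟨hN₁ x hx.1, hTN₂ x⟩
  have hRK : ∀ x ∈ N₁ ⊓ N₂, R x ∈ N₁ ⊓ N₂ := fun x hx ↦ ⟨hRN₁ x, hN₂ x hx.2⟩
  have hsup : ∀ x ∈ M₁ ⊔ M₂, (T + R) x ∈ M₁ ⊔ M₂ := fun x hx ↦
    Submodule.add_mem_sup (apply_mem_of_mem_sup hM₁ hTM₂ x hx)
      (apply_mem_of_mem_sup hM₂ hRM₁ x (sup_comm M₁ M₂ ▸ hx))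
  have hinf : ∀ x ∈ N₁ ⊓ N₂, (T + R) x ∈ N₁ ⊓ N₂ := fun x hx ↦ add_mem (hTK x hx) (hRK x hx)
  have hσTK : spectrum ℂ (restr T _ hTK) ⊆ spectrum ℂ (restr T N₁ hN₁) :=
    spectrum_restr_subset_of_eq_inf hMN₂ (fun x hx ↦ hTM₂ x hx ▸ M₂.zero_mem)
      (fun x _ ↦ hTN₂ x) hN₁ hTK (fun x hx ↦ hkerT (hTM₂ x hx)) rfl
  have hσRK : spectrum ℂ (restr R _ hRK) ⊆ spectrum ℂ (restr R N₂ hN₂) :=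
    spectrum_restr_subset_of_eq_inf hMN₁ (fun x hx ↦ hRM₁ x hx ▸ M₁.zero_mem)
      (fun x _ ↦ hRN₁ x) hN₂ hRK (fun x hx ↦ hkerR (hRM₁ x hx)) (inf_comm N₁ N₂)
  exact ⟨M₁ ⊔ M₂, N₁ ⊓ N₂, hsup, hinf, isClosed_sup_of_isUnit_restr hT hM₁c hM₂c hTM₂,
    hN₁c.inter hN₂c, isCompl_sup_inf_of_le hMN₁ hMN₂ fun x hx ↦ hkerT (hTM₂ x hx),
    isUnit_restr_add_sup hT hR hTM₂ hRM₁ hsup, (hσT.union hσR).mono <|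
      (spectrum_restr_add_subset hTR hTK hRK hinf).trans (union_subset_union hσTK hσRK)⟩

end Restriction

/-- If `T` and `R` are almost invertible and `TR = RT = 0`, then `T + R` is almost
invertible. -/
theorem almostInv_add (T R : X →L[ℂ] X) (hTR : T * R = 0) (hRT : R * T = 0)
    (hT : AlmostInv T) (hR : AlmostInv R) : AlmostInv (T + R) :=
  almostInv_add_general T R hTR hRT hT hR
end

section
/- Let X be a complex Banach space and let T, S be bounded linear operators on X with TS = ST. If σ(T) and σ(S) are at most countable, then σ(T + S) and σ(TS) are at most countable. -/
open Ordinal Set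

variable {X : Type*} [NormedAddCommGroup X] [NormedSpace ℂ X] [CompleteSpace X]

/-!
The bicommutant of two commuting elements `a`, `b` of a complex Banach algebra is a commutative
Banach algebra, and it contains the inverses of those of its elements that are invertible in the
whole algebra, so passing to it does not change spectra. There, by Gelfand theory, the spectrum of
an element is the set of its values under the characters. As these are additive and multiplicative,
`σ(a + b) ⊆ σ(a) + σ(b)` and `σ(ab) ⊆ σ(a)σ(b)`.
-/

section Algebra

variable {R A : Type*}

theorem isUnit_coe_centralizer_iff [CommSemiring R] [Semiring A] [Algebra R A] {s : Set A}
    {c : Subalgebra.centralizer R s} : IsUnit (c : A) ↔ IsUnit c := by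
  refine ⟨fun hc ↦ ?_, fun hc ↦ hc.map (Subalgebra.centralizer R s).val⟩
  have hinv : (↑hc.unit⁻¹ : A) ∈ Subalgebra.centralizer R s := fun g hg ↦
    have hgc : Commute g hc.unit := c.2 g hg
    hgc.units_inv_right
  exact ⟨⟨c, ⟨_, hinv⟩, Subtype.ext hc.mul_val_inv, Subtype.ext hc.val_inv_mul⟩, rfl⟩

theorem spectrum_coe_centralizer [CommRing R] [Ring A] [Algebra R A] {s : Set A}
    (c : Subalgebra.centralizer R s) : spectrum R (c : A) = spectrum R c :=
  Set.ext fun z ↦ not_congr <|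
    isUnit_coe_centralizer_iff (c := algebraMap R (Subalgebra.centralizer R s) z - c)

variable [CommSemiring R] [Semiring A] [Algebra R A]

variable (R) in
/-- The bicommutant of `s`, as a subalgebra: the centralizer of the centralizer of `s`. It serves
as a commutative subalgebra containing `s` when the elements of `s` commute with one another. -/
abbrev bicommutant (s : Set A) : Subalgebra R A :=
  Subalgebra.centralizer R s.centralizer

theorem isMulCommutative_bicommutant {s : Set A} (hs : s.Pairwise Commute) :
    IsMulCommutative (bicommutant R s) :=
  .of_setLike_mul_comm <| Set.centralizer_centralizer_comm_of_comm hs.of_refl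

theorem exists_pairwise_commute_mem_bicommutant {a b : A} (hab : Commute a b) :
    ∃ s : Set A, s.Pairwise Commute ∧ a ∈ bicommutant R s ∧ b ∈ bicommutant R s :=
  have hsub : {a, b} ⊆ (bicommutant R {a, b} : Set A) := Set.subset_centralizer_centralizer
  ⟨{a, b}, Set.pairwise_pair_of_symm.2 fun _ ↦ hab, Set.pair_subset_iff.1 hsub⟩

end Algebra

section BanachAlgebra

variable {A : Type*} [NormedRing A] [NormedAlgebra ℂ A] [CompleteSpace A]

theorem mem_spectrum_iff_exists_algHom [IsMulCommutative A] {a : A} {z : ℂ} :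
    z ∈ spectrum ℂ a ↔ ∃ φ : A →ₐ[ℂ] ℂ, φ a = z := by
  let : NormedCommRing A := { ‹NormedRing A› with mul_comm := mul_comm' }
  exact WeakDual.CharacterSpace.mem_spectrum_iff_exists.trans
    WeakDual.CharacterSpace.equivAlgHom.exists_congr_left

theorem mem_spectrum_coe_bicommutant_iff {s : Set A} (hs : s.Pairwise Commute)
    {c : bicommutant ℂ s} {z : ℂ} :
    z ∈ spectrum ℂ (c : A) ↔ ∃ φ : bicommutant ℂ s →ₐ[ℂ] ℂ, φ c = z := by
  have : IsMulCommutative (bicommutant ℂ s) := isMulCommutative_bicommutant hs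
  have : CompleteSpace (bicommutant ℂ s) :=
    (Set.isClosed_centralizer s.centralizer).completeSpace_coe
  rw [spectrum_coe_centralizer, mem_spectrum_iff_exists_algHom]

open scoped Pointwise

theorem spectrum_add_subset_of_commute {a b : A} (hab : Commute a b) :
    spectrum ℂ (a + b) ⊆ spectrum ℂ a + spectrum ℂ b := by
  intro z hz
  obtain ⟨s, hs, ha, hb⟩ := exists_pairwise_commute_mem_bicommutant (R := ℂ) hab
  lift a to bicommutant ℂ s using ha
  lift b to bicommutant ℂ s using hb
  obtain ⟨φ, rfl⟩ := (mem_spectrum_coe_bicommutant_iff hs (c := a + b)).1 hz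
  rw [map_add]
  exact Set.add_mem_add ((mem_spectrum_coe_bicommutant_iff hs).2 ⟨φ, rfl⟩)
    ((mem_spectrum_coe_bicommutant_iff hs).2 ⟨φ, rfl⟩)

theorem spectrum_mul_subset_of_commute {a b : A} (hab : Commute a b) :
    spectrum ℂ (a * b) ⊆ spectrum ℂ a * spectrum ℂ b := by
  intro z hz
  obtain ⟨s, hs, ha, hb⟩ := exists_pairwise_commute_mem_bicommutant (R := ℂ) hab
  lift a to bicommutant ℂ s using ha
  lift b to bicommutant ℂ s using hb
  obtain ⟨φ, rfl⟩ := (mem_spectrum_coe_bicommutant_iff hs (c := a * b)).1 hz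
  rw [map_mul]
  exact Set.mul_mem_mul ((mem_spectrum_coe_bicommutant_iff hs).2 ⟨φ, rfl⟩)
    ((mem_spectrum_coe_bicommutant_iff hs).2 ⟨φ, rfl⟩)

theorem countable_spectrum_add_and_mul_general {a b : A} (hab : Commute a b)
    (ha : (spectrum ℂ a).Countable) (hb : (spectrum ℂ b).Countable) :
    (spectrum ℂ (a + b)).Countable ∧ (spectrum ℂ (a * b)).Countable :=
  ⟨(ha.image2 hb (· + ·)).mono (spectrum_add_subset_of_commute hab),
    (ha.image2 hb (· * ·)).mono (spectrum_mul_subset_of_commute hab)⟩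

end BanachAlgebra

/-- If `T` and `S` commute and both have at most countable spectrum, then `T + S` and
`TS` have at most countable spectrum. -/
theorem countable_spectrum_add_and_mul (T S : X →L[ℂ] X) (hc : T * S = S * T)
    (hT : (spectrum ℂ T).Countable) (hS : (spectrum ℂ S).Countable) :
    (spectrum ℂ (T + S)).Countable ∧ (spectrum ℂ (T * S)).Countable :=
  countable_spectrum_add_and_mul_general hc hT hS
end
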